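/- arXiv:1708.03876 — 2 statements merged into one kernel-verified Lean document; each statement's English description precedes it below -/
import Mathlib

section
/- If a is a ribbon with n nodes all of which are positive, then there exists an extension of a with at most n/2 − 1 critical points in the open unit disk; that is, γ(a) ≤ n/2 − 1. -/
open scoped RealInnerProductSpace

noncomputable section

abbrev E2 : Type := EuclideanSpace ℝ (Fin 2)

/-- The point (cos t, sin t) on the unit circle in ℝ². -/
def sphPt (t : ℝ) : E2 := (EuclideanSpace.equiv (Fin 2) ℝ).symm ![Real.cos t, Real.sin t]

/-- A ribbon with `n` nodes, encoded via the angle parametrization `g = φ ∘ (cos, sin)`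
of a C^∞ function `φ : S¹ → ℝ` whose critical points on the circle are exactly the `n`
nondegenerate local extrema (nodes) at angles `θ 0 < θ 1 < ⋯ < θ (n-1)` in `[0, 2π)`,
with pairwise distinct critical values, together with a marking `ν` of the nodes by `±1`. -/
structure Ribbon (n : ℕ) : Type where
  g : ℝ → ℝ
  θ : Fin n → ℝ
  ν : Fin n → ℤ
  n_even : Even n
  n_pos : 0 < n
  smooth_g : ContDiff ℝ (⊤ : ℕ∞) g
  periodic_g : Function.Periodic g (2 * Real.pi)
  theta_mem : ∀ i, θ i ∈ Set.Ico (0 : ℝ) (2 * Real.pi)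
  theta_mono : StrictMono θ
  node_crit : ∀ i, deriv g (θ i) = 0
  node_nondeg : ∀ i, deriv (deriv g) (θ i) ≠ 0
  crit_only : ∀ t ∈ Set.Ico (0 : ℝ) (2 * Real.pi), deriv g t = 0 → ∃ i, t = θ i
  values_distinct : ∀ i j, g (θ i) = g (θ j) → i = j
  nu_sign : ∀ i, ν i = 1 ∨ ν i = -1

/-- The signature σ = s₊ − s₋ of a ribbon. -/
def Ribbon.sigma {n : ℕ} (a : Ribbon n) : ℤ := ∑ i, a.ν i

/-- Critical points of `f` in the open unit disk. -/
def critPts (f : E2 → ℝ) : Set E2 :=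
  {x | x ∈ Metric.ball (0 : E2) 1 ∧ fderiv ℝ f x = 0}

/-- `f : ℝ² → ℝ` is an extension of the ribbon `a`: it is C^∞, agrees with `φ` on the unit
circle, has nowhere-vanishing gradient on the circle, and at each node the radial derivative
`⟪∇f(p), p⟫` has sign `ν p` if `p` is a local maximum of `φ` (second derivative of `g`
negative there) and sign `−ν p` if `p` is a local minimum of `φ`. -/
def IsExtension {n : ℕ} (a : Ribbon n) (f : E2 → ℝ) : Prop :=
  ContDiff ℝ (⊤ : ℕ∞) f ∧
  (∀ t : ℝ, f (sphPt t) = a.g t) ∧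
  (∀ x ∈ Metric.sphere (0 : E2) 1, fderiv ℝ f x ≠ 0) ∧
  (∀ i : Fin n,
    (deriv (deriv a.g) (a.θ i) < 0 →
      0 < (a.ν i : ℝ) * ⟪gradient f (sphPt (a.θ i)), sphPt (a.θ i)⟫) ∧
    (0 < deriv (deriv a.g) (a.θ i) →
      (a.ν i : ℝ) * ⟪gradient f (sphPt (a.θ i)), sphPt (a.θ i)⟫ < 0))

/-- The ribbon invariant γ: the infimum, over all extensions `f` of `a`, of the number of
critical points of `f` in the open unit disk (a value in `ℕ∞`). -/
def gammaR {n : ℕ} (a : Ribbon n) : ℕ∞ :=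
  sInf {k : ℕ∞ | ∃ f : E2 → ℝ, IsExtension a f ∧ (critPts f).encard = k}

lemma exists_T : ∃ T : ℝ → ℝ, ContDiff ℝ (⊤ : ℕ∞) T ∧ (∀ u ≤ 0, T u = 0) ∧ (∀ u, 1 ≤ u → T u = 1) ∧
    (∀ u ∈ Set.Ioo (0:ℝ) 1, 0 < deriv T u) ∧ (∀ u, 0 ≤ deriv T u) ∧ (∀ u, 1 ≤ u → deriv T u = 0) := by
  set φ : ℝ → ℝ := fun u => expNegInvGlue u * expNegInvGlue (1 - u) with hφ
  have hsm : ContDiff ℝ (⊤ : ℕ∞) φ := by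
    exact expNegInvGlue.contDiff.mul (expNegInvGlue.contDiff.comp (contDiff_const.sub contDiff_id))
  have hc : Continuous φ := hsm.continuous
  have h0 : ∀ u ≤ 0, φ u = 0 := fun u hu => by simp [hφ, expNegInvGlue.zero_of_nonpos hu]
  have h1 : ∀ u, 1 ≤ u → φ u = 0 := fun u hu => by
    simp [hφ, expNegInvGlue.zero_of_nonpos (show 1 - u ≤ 0 by linarith)]
  have hp : ∀ u ∈ Set.Ioo (0:ℝ) 1, 0 < φ u := fun u hu =>
    mul_pos (expNegInvGlue.pos_of_pos hu.1) (expNegInvGlue.pos_of_pos (by linarith [hu.2]))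
  set c := ∫ x in (0:ℝ)..1, φ x with hcdef
  have hcpos : 0 < c := intervalIntegral.intervalIntegral_pos_of_pos_on (hc.intervalIntegrable _ _)
    (fun x hx => hp x hx) one_pos
  have hd : ∀ u, HasDerivAt (fun u => (∫ x in (0:ℝ)..u, φ x) / c) (φ u / c) u := fun u =>
    (intervalIntegral.integral_hasDerivAt_right (hc.intervalIntegrable _ _)
      (hc.stronglyMeasurableAtFilter _ _) hc.continuousAt).div_const c
  refine ⟨fun u => (∫ x in (0:ℝ)..u, φ x) / c, ?_, ?_, ?_, ?_, ?_, ?_⟩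
  · rw [contDiff_infty_iff_deriv]
    refine ⟨fun u => (hd u).differentiableAt, ?_⟩
    rw [show deriv (fun u => (∫ x in (0:ℝ)..u, φ x) / c) = fun u => φ u / c from
      funext fun u => (hd u).deriv]
    exact hsm.div_const c
  · intro u hu
    have : ∫ x in (0:ℝ)..u, φ x = ∫ x in (0:ℝ)..u, (0:ℝ) := by
      apply intervalIntegral.integral_congr
      intro x hx
      rw [Set.uIcc_of_ge hu] at hx
      exact h0 x hx.2
    simp [this]
  · intro u hu
    have h2 : ∫ x in (1:ℝ)..u, φ x = ∫ x in (1:ℝ)..u, (0:ℝ) := by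
      apply intervalIntegral.integral_congr
      intro x hx
      rw [Set.uIcc_of_le hu] at hx
      exact h1 x hx.1
    have h3 := intervalIntegral.integral_add_adjacent_intervals
      (hc.intervalIntegrable (μ := MeasureTheory.volume) 0 1) (hc.intervalIntegrable (μ := MeasureTheory.volume) 1 u)
    rw [h2] at h3
    simp at h3
    simp only [← h3, ← hcdef]
    field_simp
  · intro u hu
    rw [(hd u).deriv]
    exact div_pos (hp u hu) hcpos
  · intro u
    rw [(hd u).deriv]
    exact div_nonneg (mul_nonneg (expNegInvGlue.nonneg _) (expNegInvGlue.nonneg _)) hcpos.le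
  · intro u hu
    rw [(hd u).deriv, h1 u hu, zero_div]

lemma sphPt_zero (t : ℝ) : sphPt t 0 = Real.cos t := by simp [sphPt]
lemma sphPt_one (t : ℝ) : sphPt t 1 = Real.sin t := by simp [sphPt]

lemma norm_sphPt (t : ℝ) : ‖sphPt t‖ = 1 := by
  rw [EuclideanSpace.norm_eq]; simp [Fin.sum_univ_two, sphPt_zero, sphPt_one]

lemma sphPt_inj {s t : ℝ} (h : sphPt s = sphPt t) : ∃ k : ℤ, s = t + k * (2 * Real.pi) := by
  have h0 := congrArg (fun x : E2 => x 0) h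
  have h1 := congrArg (fun x : E2 => x 1) h
  simp only [sphPt_zero, sphPt_one] at h0 h1
  have := Real.Angle.cos_sin_inj h0 h1
  obtain ⟨k, hk⟩ := Real.Angle.angle_eq_iff_two_pi_dvd_sub.1 this
  exact ⟨k, by linarith⟩

lemma periodic_eq {G : ℝ → ℝ} (hG : Function.Periodic G (2 * Real.pi)) {s t : ℝ}
    (h : sphPt s = sphPt t) : G s = G t := by
  obtain ⟨k, rfl⟩ := sphPt_inj h
  exact hG.int_mul k t

lemma sphPt_add (t : ℝ) (k : ℤ) : sphPt (t + k * (2 * Real.pi)) = sphPt t := by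
  simp [sphPt]

def toC (x : E2) : ℂ := ⟨x 0, x 1⟩
def ang (x : E2) : ℝ := Complex.arg (toC x)

lemma norm_toC (x : E2) : ‖toC x‖ = ‖x‖ := by
  rw [EuclideanSpace.norm_eq, Complex.norm_def, Complex.normSq_apply]
  simp [Fin.sum_univ_two, toC, pow_two]

lemma branch (x : E2) (t0 : ℝ) :
    x = ‖x‖ • sphPt (t0 + Complex.arg (toC x * Complex.exp (-t0 * Complex.I))) := by
  set w := toC x * Complex.exp (-t0 * Complex.I) with hw
  have hn : ‖w‖ = ‖x‖ := by
    rw [hw, norm_mul, norm_toC, show (-(t0:ℂ)) * Complex.I = ((-t0 : ℝ) : ℂ) * Complex.I by push_cast; ring,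
      Complex.norm_exp_ofReal_mul_I, mul_one]
  have h1 : toC x = ‖x‖ * Complex.exp (((t0 + w.arg : ℝ) : ℂ) * Complex.I) := by
    have h2 := Complex.norm_mul_exp_arg_mul_I w
    rw [hn] at h2
    push_cast
    rw [add_mul, Complex.exp_add, mul_left_comm, h2, hw, mul_left_comm, ← Complex.exp_add]
    simp
  rw [Complex.exp_mul_I, ← Complex.ofReal_cos, ← Complex.ofReal_sin] at h1
  have hre := congrArg Complex.re h1
  have him := congrArg Complex.im h1
  simp [toC, -Complex.ofReal_cos, -Complex.ofReal_sin] at hre him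
  ext i
  fin_cases i
  · simpa [sphPt_zero] using hre
  · simpa [sphPt_one] using him

lemma polar (x : E2) : x = ‖x‖ • sphPt (ang x) := by
  have := branch x 0
  simpa [ang] using this

lemma ang_smul {G : ℝ → ℝ} (hG : Function.Periodic G (2 * Real.pi)) {r : ℝ} (hr : 0 < r) (t : ℝ) :
    G (ang (r • sphPt t)) = G t := by
  apply periodic_eq hG
  have h := polar (r • sphPt t)
  rw [norm_smul, norm_sphPt, mul_one, Real.norm_of_nonneg hr.le] at h
  exact (smul_right_injective E2 hr.ne' h).symm

lemma contDiff_toC : ContDiff ℝ (⊤ : ℕ∞) toC := by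
  have : toC = fun x : E2 => ((x 0 : ℝ) : ℂ) + ((x 1 : ℝ) : ℂ) * Complex.I := by
    funext x; apply Complex.ext <;> simp [toC]
  rw [this]
  have h0 : ∀ i : Fin 2, ContDiff ℝ (⊤ : ℕ∞) (fun x : E2 => ((x i : ℝ) : ℂ)) := fun i =>
    Complex.ofRealCLM.contDiff.comp (EuclideanSpace.proj (𝕜 := ℝ) i).contDiff
  exact (h0 0).add ((h0 1).mul contDiff_const)

lemma contDiffAt_ang {G : ℝ → ℝ} (hG : Function.Periodic G (2 * Real.pi))
    (hs : ContDiff ℝ (⊤ : ℕ∞) G) {x0 : E2} (hx : x0 ≠ 0) :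
    ContDiffAt ℝ (⊤ : ℕ∞) (fun x => G (ang x)) x0 := by
  set t0 := ang x0 with ht0
  have heq : (fun x => G (ang x)) =ᶠ[nhds x0]
      fun x => G (t0 + (Complex.log (toC x * Complex.exp (-t0 * Complex.I))).im) := by
    filter_upwards [isOpen_ne.mem_nhds hx] with x hx'
    apply periodic_eq hG
    have h1 := branch x t0
    rw [Complex.log_im]
    have h2 := polar x
    have hn : ‖x‖ ≠ 0 := norm_ne_zero_iff.2 hx'
    apply smul_right_injective E2 hn
    exact h2.symm.trans h1
  refine ContDiffAt.congr_of_eventuallyEq ?_ heq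
  apply hs.contDiffAt.comp
  apply contDiffAt_const.add
  have hsl : toC x0 * Complex.exp (-t0 * Complex.I) ∈ Complex.slitPlane := by
    have h2 := Complex.norm_mul_exp_arg_mul_I (toC x0)
    change _ * Complex.exp (t0 * Complex.I) = _ at h2
    rw [← h2, mul_assoc, ← Complex.exp_add, ← add_mul, add_neg_cancel, zero_mul, Complex.exp_zero,
      mul_one]
    exact Complex.ofReal_mem_slitPlane.2 (by rw [norm_toC]; exact norm_pos_iff.2 hx)
  have h3 : ContDiffAt ℝ (⊤ : ℕ∞) Complex.log (toC x0 * Complex.exp (-t0 * Complex.I)) :=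
    (Complex.contDiffAt_log hsl).restrict_scalars ℝ
  exact Complex.imCLM.contDiff.contDiffAt.comp x0 (h3.comp x0 (contDiff_toC.contDiffAt.mul contDiffAt_const))

lemma per_deriv {G : ℝ → ℝ} (hG : Function.Periodic G (2 * Real.pi)) :
    Function.Periodic (deriv G) (2 * Real.pi) := by
  intro t
  have : (fun s => G (s + 2 * Real.pi)) = G := funext hG
  rw [← deriv_comp_add_const, this]

lemma per_bound {p q : ℝ → ℝ} (hp : Continuous p) (hq : Continuous q)
    (pp : Function.Periodic p (2 * Real.pi)) (pq : Function.Periodic q (2 * Real.pi))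
    (h : ∀ t, p t ≤ 0 → 0 < q t) : ∃ c > 0, ∀ t, p t ≤ 0 → c ≤ q t := by
  have hK : IsCompact (Set.Icc 0 (2 * Real.pi) ∩ {t | p t ≤ 0}) :=
    isCompact_Icc.inter_right (isClosed_le hp continuous_const)
  have red : ∀ t, ∃ s ∈ Set.Icc 0 (2 * Real.pi), p t = p s ∧ q t = q s := by
    intro t
    obtain ⟨s, hs, h1, h2⟩ : ∃ s ∈ Set.Icc 0 (2 * Real.pi), p t = p s ∧ q t = q s := by
      have hpi := Real.two_pi_pos
      refine ⟨toIcoMod hpi 0 t, Set.Ico_subset_Icc_self (by simpa using toIcoMod_mem_Ico hpi 0 t), ?_, ?_⟩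
      · rw [toIcoMod]; exact (pp.sub_zsmul_eq _).symm
      · rw [toIcoMod]; exact (pq.sub_zsmul_eq _).symm
    exact ⟨s, hs, h1, h2⟩
  rcases (Set.Icc 0 (2 * Real.pi) ∩ {t | p t ≤ 0}).eq_empty_or_nonempty with he | hne
  · refine ⟨1, one_pos, fun t ht => ?_⟩
    obtain ⟨s, hs, h1, h2⟩ := red t
    have : s ∈ (Set.Icc 0 (2 * Real.pi) ∩ {t | p t ≤ 0}) := ⟨hs, by simpa [← h1] using ht⟩
    rw [he] at this; exact this.elim
  · obtain ⟨s0, hs0, hmin⟩ := hK.exists_isMinOn hne hq.continuousOn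
    refine ⟨q s0, h _ hs0.2, fun t ht => ?_⟩
    obtain ⟨s, hs, h1, h2⟩ := red t
    rw [h2]
    exact hmin ⟨hs, by simpa [← h1] using ht⟩

lemma per_bdd {p : ℝ → ℝ} (hp : Continuous p) (pp : Function.Periodic p (2 * Real.pi)) :
    ∃ M > 0, ∀ t, |p t| ≤ M := by
  obtain ⟨M, hM⟩ := (pp.isBounded_of_continuous Real.two_pi_pos.ne' hp).exists_norm_le
  exact ⟨max M 1, by positivity, fun t => le_max_of_le_left (hM _ ⟨t, rfl⟩)⟩

def DExt (g κ : ℝ → ℝ) (m : ℕ∞) : Prop :=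
  ∃ (F : E2 → ℝ) (β : ℝ → ℝ) (r0 : ℝ), 0 < r0 ∧ r0 < 1 ∧ ContDiff ℝ (⊤ : ℕ∞) F ∧
    ContDiff ℝ (⊤ : ℕ∞) β ∧ β 1 = 0 ∧ (∀ r ∈ Set.Ioc r0 1, 0 < deriv β r) ∧
    (∀ r > r0, ∀ t, F (r • sphPt t) = g t + β r * κ t) ∧ (critPts F).encard ≤ m

lemma hasDerivAt_sphPt (t : ℝ) : DifferentiableAt ℝ sphPt t := by
  unfold sphPt
  apply (EuclideanSpace.equiv (Fin 2) ℝ).symm.differentiableAt.comp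
  rw [differentiableAt_pi]
  intro i
  fin_cases i
  · exact Real.differentiable_cos t
  · exact Real.differentiable_sin t

lemma ang_deriv_zero {f : E2 → ℝ} (hf : ContDiff ℝ (⊤ : ℕ∞) f) {r t d : ℝ}
    (h : fderiv ℝ f (r • sphPt t) = 0) (hd : HasDerivAt (fun s => f (r • sphPt s)) d t) : d = 0 := by
  have h1 : HasFDerivAt f (0 : E2 →L[ℝ] ℝ) (r • sphPt t) := by
    rw [← h]; exact (hf.differentiable (by simp) _).hasFDerivAt
  have h2 := h1.comp_hasDerivAt t ((hasDerivAt_sphPt t).hasDerivAt.const_smul r)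
  exact hd.unique (by simpa [Function.comp_def] using h2)

lemma rad_deriv {f : E2 → ℝ} (hf : ContDiff ℝ (⊤ : ℕ∞) f) {r t d : ℝ}
    (hd : HasDerivAt (fun s => f (s • sphPt t)) d r) : d = fderiv ℝ f (r • sphPt t) (sphPt t) := by
  have h2 := (hf.differentiable (by simp) (r • sphPt t)).hasFDerivAt.comp_hasDerivAt r
    ((hasDerivAt_id r).smul_const (sphPt t))
  exact hd.unique (by simpa [Function.comp_def] using h2)

set_option maxHeartbeats 2000000 in
lemma step {g g1 κ1 : ℝ → ℝ} {m j : ℕ∞} (E : DExt g1 κ1 m)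
    (sg : ContDiff ℝ (⊤ : ℕ∞) g) (sg1 : ContDiff ℝ (⊤ : ℕ∞) g1) (sk : ContDiff ℝ (⊤ : ℕ∞) κ1)
    (pg : Function.Periodic g (2 * Real.pi)) (pg1 : Function.Periodic g1 (2 * Real.pi))
    (pk : Function.Periodic κ1 (2 * Real.pi))
    (ha : ∀ t, deriv g1 t = 0 → 0 < κ1 t * (g t - g1 t))
    (hb : ∀ t, deriv g t = 0 → g t ≠ g1 t)
    (hbad : {p | ∃ t, p = sphPt t ∧ g t = g1 t ∧ deriv g t * deriv g1 t < 0}.encard ≤ j) :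
    DExt g (fun t => g t - g1 t) (m + j) := by
  obtain ⟨F, β, r0, hr0, hr01, sF, sβ, hβ1, hβ', hF, hm⟩ := E
  obtain ⟨T, sT, T0, T1, Tpos, Tnn, Td1⟩ := exists_T
  have dcont : ∀ {h : ℝ → ℝ}, ContDiff ℝ (⊤ : ℕ∞) h → Continuous (deriv h) := fun h =>
    (contDiff_infty_iff_deriv.1 h).2.continuous
  have hder : ∀ {h : ℝ → ℝ}, ContDiff ℝ (⊤ : ℕ∞) h → ∀ t, HasDerivAt h (deriv h t) t := fun h t =>
    (h.differentiable (by simp) t).hasDerivAt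
  obtain ⟨c, hc, hcb⟩ : ∃ c > 0, ∀ t, κ1 t * (g t - g1 t) ≤ 0 → c ≤ |deriv g1 t| := by
    apply per_bound (sk.continuous.mul (sg.continuous.sub sg1.continuous)) (dcont sg1).abs
    · intro t
      change κ1 (t + 2 * Real.pi) * (g (t + 2 * Real.pi) - g1 (t + 2 * Real.pi)) = κ1 t * (g t - g1 t)
      rw [pk t, pg t, pg1 t]
    · intro t
      change |deriv g1 (t + 2 * Real.pi)| = |deriv g1 t|
      rw [per_deriv pg1 t]
    · intro t ht
      refine abs_pos.2 fun h0 => ?_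
      exact absurd (ha t h0) (not_lt.2 ht)
  obtain ⟨M1, hM1, hM1b⟩ := per_bdd (dcont sk) (per_deriv pk)
  obtain ⟨M2, hM2, hM2b⟩ := per_bdd ((dcont sg).sub (dcont sg1)) (p := fun t => deriv g t - deriv g1 t)
    (fun t => by simp only [per_deriv pg t, per_deriv pg1 t])
  have Tmono : Monotone T := monotone_of_deriv_nonneg (sT.differentiable (by simp)) Tnn
  have Tsm : StrictMonoOn T (Set.Icc 0 1) := strictMonoOn_of_deriv_pos (convex_Icc 0 1)
    sT.continuous.continuousOn (by simpa using Tpos)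
  have Th : 0 < T (1/2) := by
    have := Tsm (by simp : (0:ℝ) ∈ Set.Icc (0:ℝ) 1) (by norm_num : (1/2:ℝ) ∈ Set.Icc (0:ℝ) 1) (by norm_num)
    rwa [T0 0 le_rfl] at this
  obtain ⟨u0, hu0, hu01, hu0b⟩ : ∃ u0 : ℝ, 0 < u0 ∧ u0 < 1 ∧ T (u0/2) / T (1/2) * M2 < c / 2 := by
    have hcont : Continuous fun u : ℝ => T (u/2) / T (1/2) * M2 := by
      have := sT.continuous
      fun_prop
    have h1 : ∀ᶠ u in nhds (0:ℝ), T (u/2) / T (1/2) * M2 < c / 2 := by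
      apply hcont.continuousAt.eventually_lt continuousAt_const
      simp [T0 0 le_rfl, hc]
    obtain ⟨u, h2, h3⟩ := ((h1.filter_mono nhdsWithin_le_nhds).and (Ioo_mem_nhdsGT one_pos)).exists
    exact ⟨u, h3.1, h3.2, h2⟩
  obtain ⟨r1, hr1, hr11, hr1b⟩ : ∃ r1 : ℝ, r0 < r1 ∧ r1 < 1 ∧ |β r1| * M1 < c / 2 := by
    have hcont : Continuous fun u : ℝ => |β u| * M1 := by
      have := sβ.continuous
      fun_prop
    have h1 : ∀ᶠ u in nhds (1:ℝ), |β u| * M1 < c / 2 := by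
      apply hcont.continuousAt.eventually_lt continuousAt_const
      simp [hβ1, hc]
    obtain ⟨u, h2, h3⟩ := ((h1.filter_mono nhdsWithin_le_nhds).and (Ioo_mem_nhdsLT hr01)).exists
    exact ⟨u, h3.1, h3.2, h2⟩
  have h1r : 0 < 1 - r1 := by linarith
  set U : ℝ → ℝ := fun r => (r - r1) / (1 - r1) with hU
  have sU : ContDiff ℝ (⊤ : ℕ∞) U := (contDiff_id.sub contDiff_const).div_const _
  have Ud : ∀ r, HasDerivAt U (1 / (1 - r1)) r := fun r => ((hasDerivAt_id r).sub_const r1).div_const _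
  set τ : ℝ → ℝ := fun r => T (U r / u0) with hτ
  set b : ℝ → ℝ := fun r => T (U r / 2) / T (1/2) with hbdef
  have sτ : ContDiff ℝ (⊤ : ℕ∞) τ := sT.comp (sU.div_const _)
  have sb : ContDiff ℝ (⊤ : ℕ∞) b := (sT.comp (sU.div_const _)).div_const _
  have τd : ∀ r, HasDerivAt τ (deriv T (U r / u0) * (1 / (1 - r1) / u0)) r := fun r =>
    (hder sT _).comp r ((Ud r).div_const _)
  have bd : ∀ r, HasDerivAt b (deriv T (U r / 2) * (1 / (1 - r1) / 2) / T (1/2)) r := fun r =>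
    ((hder sT _).comp r ((Ud r).div_const _)).div_const _
  have Uneg : ∀ r ≤ r1, U r ≤ 0 := fun r hr => div_nonpos_of_nonpos_of_nonneg (by linarith) h1r.le
  have Upos : ∀ r, r1 ≤ r → 0 ≤ U r := fun r hr => div_nonneg (by linarith) h1r.le
  have Ult : ∀ r < 1, U r < 1 := fun r hr => by rw [hU]; simp only; rw [div_lt_one h1r]; linarith
  have U1 : U 1 = 1 := div_self h1r.ne'
  have τ0 : ∀ r ≤ r1, τ r = 0 := fun r hr => T0 _ (div_nonpos_of_nonpos_of_nonneg (Uneg r hr) hu0.le)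
  have b0 : ∀ r ≤ r1, b r = 0 := fun r hr => by
    simp only [hbdef, T0 _ (div_nonpos_of_nonpos_of_nonneg (Uneg r hr) zero_le_two), zero_div]
  set f : E2 → ℝ := fun x => F x + (b ‖x‖ * (g (ang x) - g1 (ang x)) - τ ‖x‖ * β ‖x‖ * κ1 (ang x)) with hf
  have hfF : ∀ x : E2, ‖x‖ ≤ r1 → f x = F x := fun x hx => by simp [hf, b0 _ hx, τ0 _ hx]
  have hfFe : ∀ x : E2, ‖x‖ < r1 → f =ᶠ[nhds x] F := fun x hx => by
    filter_upwards [(isOpen_lt continuous_norm continuous_const).mem_nhds hx] with y hy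
    exact hfF y (le_of_lt hy)
  have sf : ContDiff ℝ (⊤ : ℕ∞) f := by
    rw [contDiff_iff_contDiffAt]
    intro x
    by_cases hx : x = 0
    · refine sF.contDiffAt.congr_of_eventuallyEq (hfFe x ?_)
      rw [hx, norm_zero]; linarith
    · have hn : ContDiffAt ℝ (⊤ : ℕ∞) (fun x : E2 => ‖x‖) x := contDiffAt_norm ℝ hx
      refine sF.contDiffAt.add (((sb.contDiffAt.comp x hn).mul
        ((contDiffAt_ang pg sg hx).sub (contDiffAt_ang pg1 sg1 hx))).sub
        (((sτ.contDiffAt.comp x hn).mul (sβ.contDiffAt.comp x hn)).mul (contDiffAt_ang pk sk hx)))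
  have form : ∀ r > r0, ∀ t, f (r • sphPt t) =
      g1 t + (β r * (1 - τ r)) * κ1 t + b r * (g t - g1 t) := by
    intro r hr t
    have hrp : 0 < r := hr0.trans hr
    simp only [hf, norm_smul, norm_sphPt, mul_one, Real.norm_of_nonneg hrp.le, hF r hr t,
      ang_smul pg hrp, ang_smul pg1 hrp, ang_smul pk hrp]
    ring
  have dθ : ∀ r > r0, ∀ t, HasDerivAt (fun s => f (r • sphPt s))
      (deriv g1 t + (β r * (1 - τ r)) * deriv κ1 t + b r * (deriv g t - deriv g1 t)) t := by
    intro r hr t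
    rw [funext (form r hr)]
    exact ((hder sg1 t).add ((hder sk t).const_mul _)).add (((hder sg t).sub (hder sg1 t)).const_mul _)
  have dr : ∀ r > r0, ∀ t, HasDerivAt (fun s => f (s • sphPt t))
      ((deriv β r * (1 - τ r) - β r * deriv τ r) * κ1 t + deriv b r * (g t - g1 t)) r := by
    intro r hr t
    have h1 : HasDerivAt (fun r => g1 t + (β r * (1 - τ r)) * κ1 t + b r * (g t - g1 t))
      ((deriv β r * (1 - τ r) - β r * deriv τ r) * κ1 t + deriv b r * (g t - g1 t)) r := by
      have := (((((hder sβ r).mul ((hder sτ r).const_sub 1))).mul_const (κ1 t)).const_add (g1 t)).add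
        ((hder sb r).mul_const (g t - g1 t))
      refine this.congr_deriv ?_
      ring
    refine h1.congr_of_eventuallyEq ?_
    filter_upwards [Ioi_mem_nhds hr] with s hs
    exact form s hs t
  have fac1 : ∀ r, r1 ≤ r → u0 ≤ U r → τ r = 1 ∧ deriv τ r = 0 := by
    intro r _ hr
    have : 1 ≤ U r / u0 := by rwa [le_div_iff₀ hu0, one_mul]
    exact ⟨T1 _ this, by rw [(τd r).deriv, Td1 _ this, zero_mul]⟩
  have fac2 : ∀ r, 0 < U r → U r ≤ 1 → 0 < deriv b r := by
    intro r h0 h1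
    rw [(bd r).deriv]
    have := Tpos (U r / 2) ⟨by linarith, by linarith⟩
    positivity
  have bnn : ∀ r, 0 ≤ deriv b r := by
    intro r
    rw [(bd r).deriv]
    have := Tnn (U r / 2)
    positivity
  have βmono : MonotoneOn β (Set.Icc r1 1) := by
    refine (strictMonoOn_of_deriv_pos (convex_Icc r1 1) sβ.continuous.continuousOn ?_).monotoneOn
    intro x hx
    rw [interior_Icc] at hx
    exact hβ' x ⟨by linarith [hx.1], hx.2.le⟩
  have bmono : ∀ r s, U r ≤ 1 → U s ≤ 1 → 0 ≤ U r → 0 ≤ U s → r < s → b r < b s := by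
    intro r s h1 h2 h3 h4 hrs
    have hUU : U r < U s := by simp only [hU]; gcongr
    have := Tsm (a := U r / 2) (b := U s / 2) ⟨by linarith, by linarith⟩ ⟨by linarith, by linarith⟩ (by linarith)
    simp only [hbdef]
    gcongr
  have b1 : b 1 = 1 := by simp only [hbdef, U1]; exact div_self Th.ne'
  have br1 : b r1 = 0 := b0 r1 le_rfl
  have Ur1 : U r1 = 0 := by simp [hU]
  set r2 := r1 + u0 * (1 - r1) with hr2
  have hUr2 : ∀ r, r2 ≤ r → u0 ≤ U r := by
    intro r hr
    simp only [hU]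
    rw [le_div_iff₀ h1r]; linarith
  have hr2' : r1 < r2 := by have := mul_pos hu0 h1r; linarith
  have hr2'' : r2 < 1 := by nlinarith
  refine ⟨f, fun r => b r - 1, r2, by linarith, hr2'', sf, sb.sub contDiff_const, by simp [b1], ?_, ?_, ?_⟩
  · intro r hr
    rw [deriv_sub_const]
    refine fac2 r (lt_of_lt_of_le hu0 (hUr2 r hr.1.le)) ?_
    rcases hr.2.lt_or_eq with h | h
    · exact (Ult r h).le
    · rw [h, U1]
  · intro r hr t
    rw [form r (by linarith) t, (fac1 r (by linarith) (hUr2 r hr.le)).1]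
    ring
  set K : Set E2 := {x | r1 ≤ ‖x‖ ∧ ‖x‖ < 1 ∧ 0 < U ‖x‖ ∧ g (ang x) = g1 (ang x) ∧
    deriv g1 (ang x) + b ‖x‖ * (deriv g (ang x) - deriv g1 (ang x)) = 0} with hK
  have hsub : critPts f ⊆ critPts F ∪ K := by
    rintro x ⟨hx1, hx2⟩
    rw [mem_ball_zero_iff] at hx1
    rcases lt_or_ge ‖x‖ r1 with h | h
    · left
      exact ⟨by simpa using hx1, by rw [← (hfFe x h).fderiv_eq]; exact hx2⟩
    right
    have hp := polar x
    set r := ‖x‖ with hr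
    set t := ang x with ht
    have hrr : r > r0 := by linarith
    rw [hp] at hx2
    have e1 := ang_deriv_zero sf hx2 (dθ r hrr t)
    have e2 := rad_deriv sf (dr r hrr t)
    rw [hx2] at e2
    simp only [zero_apply] at e2
    rcases lt_or_ge (U r) u0 with hu | hu
    · exfalso
      have hUnn := Upos r h
      have hτ1 : τ r < 1 := by
        have h1 : U r / u0 < 1 := by rwa [div_lt_one hu0]
        have := Tsm (a := U r / u0) (b := 1) ⟨by positivity, h1.le⟩ ⟨by norm_num, le_rfl⟩ h1
        rwa [T1 1 le_rfl] at this
      have hτ0 : 0 ≤ τ r := by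
        have := Tmono (a := 0) (b := U r / u0) (by positivity)
        rwa [T0 0 le_rfl] at this
      have hβr : β r ≤ 0 := by
        rw [← hβ1]; exact βmono ⟨h, hx1.le⟩ ⟨hr11.le, le_rfl⟩ hx1.le
      have hβr1 : β r1 ≤ β r := βmono ⟨le_rfl, hr11.le⟩ ⟨h, hx1.le⟩ h
      have hτ' : 0 ≤ deriv τ r := by
        rw [(τd r).deriv]; have := Tnn (U r / u0); positivity
      have ha' : 0 < deriv β r * (1 - τ r) - β r * deriv τ r := by
        have h1 := mul_pos (hβ' r ⟨hrr, hx1.le⟩) (sub_pos.2 hτ1)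
        nlinarith [mul_nonneg (neg_nonneg.2 hβr) hτ']
      rcases le_or_gt (κ1 t * (g t - g1 t)) 0 with hs | hs
      · have hcc := hcb t hs
        have hb1 : 0 ≤ b r := by
          have := Tmono (a := 0) (b := U r / 2) (by positivity)
          rw [T0 0 le_rfl] at this
          simp only [hbdef]; positivity
        have hb2 : b r ≤ T (u0/2) / T (1/2) := by
          have := Tmono (a := U r / 2) (b := u0 / 2) (by linarith)
          simp only [hbdef]; gcongr
        have k1 : |β r * (1 - τ r) * deriv κ1 t| ≤ |β r1| * M1 := by
          rw [abs_mul, abs_mul]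
          have h3 : |β r| * |1 - τ r| ≤ |β r1| * 1 := by
            apply mul_le_mul _ _ (abs_nonneg _) (abs_nonneg _)
            · rw [abs_of_nonpos hβr, abs_of_nonpos (hβr1.trans hβr)]; linarith
            · rw [abs_of_pos (by linarith)]; linarith
          rw [mul_one] at h3
          exact mul_le_mul h3 (hM1b t) (abs_nonneg _) (abs_nonneg _)
        have k2 : |b r * (deriv g t - deriv g1 t)| ≤ T (u0/2) / T (1/2) * M2 := by
          rw [abs_mul, abs_of_nonneg hb1]
          exact mul_le_mul hb2 (hM2b t) (abs_nonneg _) (hb1.trans hb2)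
        have k3 : |deriv g1 t| ≤ |β r * (1 - τ r) * deriv κ1 t| + |b r * (deriv g t - deriv g1 t)| := by
          have : deriv g1 t = -(β r * (1 - τ r) * deriv κ1 t) + -(b r * (deriv g t - deriv g1 t)) := by
            linarith
          have h9 := abs_add_le (-(β r * (1 - τ r) * deriv κ1 t)) (-(b r * (deriv g t - deriv g1 t)))
          rw [← this, abs_neg, abs_neg] at h9
          exact h9
        linarith
      · have hbn := bnn r
        have h3 := congrArg (fun y => y * κ1 t) e2
        have hk : κ1 t ≠ 0 := by rintro h0; rw [h0, zero_mul] at hs; exact lt_irrefl _ hs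
        have h4 : 0 < (κ1 t)^2 := by positivity
        simp only [zero_mul] at h3
        nlinarith [mul_pos ha' h4, mul_nonneg hbn hs.le]
    · obtain ⟨q1, q2⟩ := fac1 r h hu
      have hb' := fac2 r (by linarith) (Ult r hx1).le
      rw [q1, q2] at e2
      rw [q1] at e1
      simp only [sub_self, mul_zero, zero_mul, zero_add, add_zero] at e1 e2
      have : g t - g1 t = 0 := by
        rcases mul_eq_zero.1 e2 with h | h
        · exact absurd h hb'.ne'
        · exact h
      exact ⟨h, hx1, by linarith, by linarith, e1⟩
  have hKb : K.encard ≤ j := by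
    refine le_trans (Set.encard_le_encard_of_injOn (f := fun x => sphPt (ang x)) ?_ ?_) hbad
    · rintro x ⟨h1, h2, h3, h4, h5⟩
      refine ⟨ang x, rfl, h4, ?_⟩
      have hlt : b ‖x‖ < 1 := by
        rw [← b1]
        exact bmono _ _ (Ult _ h2).le U1.le h3.le (by rw [U1]; norm_num) h2
      have hgt : 0 < b ‖x‖ := by
        rw [← br1]
        refine bmono _ _ (by rw [Ur1]; norm_num) (Ult _ h2).le Ur1.ge h3.le ?_
        rcases h1.lt_or_eq with h | h
        · exact h
        · rw [← h, Ur1] at h3; exact absurd h3 (lt_irrefl _)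
      have hg' : deriv g (ang x) ≠ 0 := fun h0 => hb _ h0 h4
      have h6 : 0 < (deriv g (ang x))^2 := by positivity
      by_contra hcon
      push Not at hcon
      have h7 := congrArg (fun y => y * deriv g (ang x)) h5
      simp only [zero_mul] at h7
      nlinarith [mul_nonneg hcon (sub_nonneg.2 hlt.le), mul_pos h6 hgt]
    · rintro x ⟨h1, h2, h3, h4, h5⟩ y ⟨k1, k2, k3, k4, k5⟩ hxy
      simp only at hxy
      have e1 := periodic_eq (per_deriv pg) hxy
      have e2 := periodic_eq (per_deriv pg1) hxy
      rw [← e1, ← e2] at k5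
      have hne : deriv g (ang x) - deriv g1 (ang x) ≠ 0 := by
        intro h0
        rw [h0, mul_zero, add_zero] at h5
        rw [h5, sub_zero] at h0
        exact hb _ h0 h4
      have hbb : b ‖x‖ = b ‖y‖ := by
        apply mul_right_cancel₀ hne; linarith
      have hnn : ‖x‖ = ‖y‖ := by
        rcases lt_trichotomy ‖x‖ ‖y‖ with h | h | h
        · exact absurd hbb (bmono _ _ (Ult _ h2).le (Ult _ k2).le h3.le k3.le h).ne
        · exact h
        · exact absurd hbb (bmono _ _ (Ult _ k2).le (Ult _ h2).le k3.le h3.le h).ne'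
      rw [polar x, polar y, hnn, hxy]
  calc (critPts f).encard ≤ (critPts F ∪ K).encard := Set.encard_le_encard hsub
    _ ≤ (critPts F).encard + K.encard := Set.encard_union_le _ _
    _ ≤ m + j := add_le_add hm hKb

structure Cls (k : ℕ) (g : ℝ → ℝ) (x : ℕ → ℝ) : Prop where
  sm : ContDiff ℝ (⊤ : ℕ∞) g
  per : Function.Periodic g (2 * Real.pi)
  mono : ∀ i < 2 * k, x i < x (i + 1)
  close : x (2 * k) = x 0 + 2 * Real.pi
  up : ∀ i < k, ∀ t ∈ Set.Ioo (x (2 * i)) (x (2 * i + 1)), 0 < deriv g t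
  dn : ∀ i < k, ∀ t ∈ Set.Ioo (x (2 * i + 1)) (x (2 * i + 2)), deriv g t < 0
  low : ∀ i < k, g (x 0) < g (x (2 * i + 1))

lemma locate (x : ℕ → ℝ) (N : ℕ) {t : ℝ} (h0 : x 0 ≤ t) (h1 : t < x N) :
    ∃ i < N, x i ≤ t ∧ t < x (i + 1) := by
  induction N with
  | zero => exact absurd h0 (not_le.2 h1)
  | succ N ih =>
    rcases lt_or_ge t (x N) with h | h
    · obtain ⟨i, hi, h2⟩ := ih h
      exact ⟨i, by omega, h2⟩
    · exact ⟨N, by omega, h, h1⟩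

lemma seq_le {x : ℕ → ℝ} {N : ℕ} (h : ∀ i < N, x i < x (i + 1)) {i j : ℕ} (hij : i ≤ j) (hj : j ≤ N) :
    x i ≤ x j := by
  induction j, hij using Nat.le_induction with
  | base => exact le_rfl
  | succ j hij ih => exact (ih (by omega)).trans (h j (by omega)).le

lemma reduce (x0 t : ℝ) : ∃ s ∈ Set.Ico x0 (x0 + 2 * Real.pi), sphPt t = sphPt s := by
  refine ⟨toIcoMod Real.two_pi_pos x0 t, toIcoMod_mem_Ico _ _ _, ?_⟩
  have := toIcoMod_add_toIcoDiv_zsmul Real.two_pi_pos x0 t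
  conv_lhs => rw [← this]
  rw [zsmul_eq_mul]
  exact sphPt_add _ _

lemma hder {h : ℝ → ℝ} (H : ContDiff ℝ (⊤ : ℕ∞) h) (t : ℝ) : HasDerivAt h (deriv h t) t :=
  (H.differentiable (by simp) t).hasDerivAt

lemma interp (N : ℕ) (x w : ℕ → ℝ) (hx : ∀ i < N, x i < x (i + 1)) :
    ∃ H : ℝ → ℝ, ContDiff ℝ (⊤ : ℕ∞) H ∧ (∀ t ≤ x 0, H t = w 0) ∧ (∀ t, x N ≤ t → H t = w N) ∧
      (∀ i ≤ N, H (x i) = w i) ∧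
      (∀ i < N, ∀ t ∈ Set.Ioo (x i) (x (i + 1)), ∃ p > 0, deriv H t = (w (i + 1) - w i) * p) := by
  obtain ⟨T, sT, T0, T1, Tpos, Tnn, Td1⟩ := exists_T
  induction N with
  | zero =>
    refine ⟨fun _ => w 0, contDiff_const, fun _ _ => rfl, fun _ _ => rfl, ?_, ?_⟩
    · intro i hi; rw [Nat.le_zero.1 hi]
    · intro i hi; omega
  | succ N ih =>
    obtain ⟨H, sH, H0, HN, Hi, Hd⟩ := ih (fun i hi => hx i (by omega))
    have hl : 0 < x (N + 1) - x N := sub_pos.2 (hx N (by omega))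
    set V : ℝ → ℝ := fun t => (t - x N) / (x (N + 1) - x N) with hV
    have sV : ContDiff ℝ (⊤ : ℕ∞) V := (contDiff_id.sub contDiff_const).div_const _
    have Vd : ∀ r, HasDerivAt V (1 / (x (N + 1) - x N)) r := fun r =>
      ((hasDerivAt_id r).sub_const (x N)).div_const _
    have V0 : ∀ t ≤ x N, T (V t) = 0 := fun t ht =>
      T0 _ (div_nonpos_of_nonpos_of_nonneg (by linarith) hl.le)
    have V1 : ∀ t, x (N + 1) ≤ t → T (V t) = 1 := fun t ht =>
      T1 _ (by rw [hV]; simp only; rw [le_div_iff₀ hl]; linarith)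
    refine ⟨fun t => H t + (w (N + 1) - w N) * T (V t), sH.add (contDiff_const.mul (sT.comp sV)),
      ?_, ?_, ?_, ?_⟩
    · intro t ht
      have : x 0 ≤ x N := seq_le hx (Nat.zero_le _) (by omega)
      simp only
      rw [H0 t ht, V0 t (ht.trans this)]; ring
    · intro t ht
      simp only
      rw [HN t (by linarith), V1 t ht]; ring
    · intro i hi
      simp only
      rcases Nat.lt_or_ge N i with h | h
      · have : i = N + 1 := by omega
        subst this
        rw [HN _ (by linarith), V1 _ le_rfl]; ring
      · rw [Hi i h, V0 _ (seq_le hx h (by omega))]; ring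
    · intro i hi t ht
      rcases Nat.lt_or_ge i N with h | h
      · obtain ⟨p, hp, he⟩ := Hd i h t ht
        refine ⟨p, hp, ?_⟩
        rw [← he]
        apply Filter.EventuallyEq.deriv_eq
        have : x (i + 1) ≤ x N := seq_le hx (by omega) (by omega)
        filter_upwards [Iio_mem_nhds ht.2] with s hs
        rw [V0 s (le_trans (le_of_lt hs) this)]; ring
      · have : i = N := by omega
        subst this
        have hVt : V t ∈ Set.Ioo (0:ℝ) 1 := by
          constructor
          · exact div_pos (by linarith [ht.1]) hl
          · rw [hV]; simp only; rw [div_lt_one hl]; linarith [ht.2]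
        refine ⟨deriv T (V t) * (1 / (x (i + 1) - x i)), mul_pos (Tpos _ hVt) (by positivity), ?_⟩
        have h1 : HasDerivAt (fun t => w i + (w (i + 1) - w i) * T (V t))
          ((w (i + 1) - w i) * (deriv T (V t) * (1 / (x (i + 1) - x i)))) t :=
          (((hder sT _).comp t (Vd t)).const_mul _).const_add _
        rw [← h1.deriv]
        apply Filter.EventuallyEq.deriv_eq
        filter_upwards [Ioi_mem_nhds ht.1] with s hs
        rw [HN s (le_of_lt hs)]

lemma periodize {H : ℝ → ℝ} {x0 c : ℝ} (sH : ContDiff ℝ (⊤ : ℕ∞) H) (h0 : ∀ t ≤ x0, H t = c)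
    (h1 : ∀ t, x0 + 2 * Real.pi ≤ t → H t = c) :
    ∃ G : ℝ → ℝ, ContDiff ℝ (⊤ : ℕ∞) G ∧ Function.Periodic G (2 * Real.pi) ∧
      (∀ t ∈ Set.Icc x0 (x0 + 2 * Real.pi), G t = H t) := by
  have hpi := Real.two_pi_pos
  have key : ∀ (m : ℤ) (t : ℝ), x0 ≤ t - m * (2 * Real.pi) → t - m * (2 * Real.pi) < x0 + 2 * Real.pi →
      H (toIcoMod hpi x0 t) = H (t - m * (2 * Real.pi)) := by
    intro m t h2 h3
    congr 1
    rw [toIcoMod_eq_iff]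
    exact ⟨⟨h2, h3⟩, m, by rw [zsmul_eq_mul]; ring⟩
  refine ⟨fun t => H (toIcoMod hpi x0 t), ?_, ?_, ?_⟩
  · rw [contDiff_iff_contDiffAt]
    intro t0
    set m := toIcoDiv hpi x0 t0 with hm
    have h2 : t0 - m * (2 * Real.pi) ∈ Set.Ico x0 (x0 + 2 * Real.pi) := by
      have := sub_toIcoDiv_zsmul_mem_Ico hpi x0 t0
      rwa [zsmul_eq_mul] at this
    have h3 : (fun t => H (toIcoMod hpi x0 t)) =ᶠ[nhds t0]
        fun t => H (t - m * (2 * Real.pi)) + H (t - (m - 1) * (2 * Real.pi)) - c := by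
      have : Set.Ioo (x0 - 2 * Real.pi + m * (2 * Real.pi)) (x0 + 2 * Real.pi + m * (2 * Real.pi)) ∈ nhds t0 :=
        Ioo_mem_nhds (by linarith [h2.1]) (by linarith [h2.2])
      filter_upwards [this] with t ht
      rcases le_or_gt x0 (t - m * (2 * Real.pi)) with h | h
      · rw [key m t h (by linarith [ht.2]), h1 (t - (m - 1) * (2 * Real.pi)) (by linarith)]; ring
      · have h5 := key (m - 1) t (by push_cast; linarith [ht.1]) (by push_cast; linarith)
        push_cast at h5
        rw [h5, h0 (t - m * (2 * Real.pi)) h.le]; ring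
    refine ContDiffAt.congr_of_eventuallyEq ?_ h3
    exact ((sH.comp (contDiff_id.sub contDiff_const)).add
      (sH.comp (contDiff_id.sub contDiff_const))).sub contDiff_const |>.contDiffAt
  · intro t
    simp only
    rw [toIcoMod_add_right]
  · intro t ht
    simp only
    rcases ht.2.lt_or_eq with h | h
    · have := key 0 t (by simpa using ht.1) (by simpa using h)
      simpa using this
    · have := key 1 t (by simp [h]) (by simp [h, Real.pi_pos])
      rw [this, h0 _ (by rw [h]; simp), h1 _ h.ge]

def shiftSeq (x : ℕ → ℝ) (i : ℕ) : ℝ := if i = 0 then x 0 else x (i + 2)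

lemma pair {k : ℕ} {g : ℝ → ℝ} {x : ℕ → ℝ} (C : Cls (k + 2) g x) :
    ∃ g1 : ℝ → ℝ, Cls (k + 1) g1 (shiftSeq x) ∧
      (∀ i < k + 2, g1 (x (2 * i + 1)) < g (x (2 * i + 1))) ∧
      (∀ i < k + 2, g (x (2 * i)) < g1 (x (2 * i))) := by
  obtain ⟨T, sT, T0, T1, Tpos, Tnn, Td1⟩ := exists_T
  have inc : ∀ i < k + 2, g (x (2 * i)) < g (x (2 * i + 1)) := by
    intro i hi
    have h := C.mono (2 * i) (by omega)
    refine strictMonoOn_of_deriv_pos (convex_Icc _ _) C.sm.continuous.continuousOn ?_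
      ⟨le_rfl, h.le⟩ ⟨h.le, le_rfl⟩ h
    rw [interior_Icc]; exact C.up i hi
  have dec : ∀ i < k + 2, g (x (2 * i + 2)) < g (x (2 * i + 1)) := by
    intro i hi
    have h := C.mono (2 * i + 1) (by omega)
    refine strictAntiOn_of_deriv_neg (convex_Icc _ _) C.sm.continuous.continuousOn ?_
      ⟨le_rfl, h.le⟩ ⟨h.le, le_rfl⟩ h
    rw [interior_Icc]; exact C.dn i hi
  obtain ⟨δ, hδ, hδb⟩ : ∃ δ > 0, ∀ i ∈ Finset.range (k + 2), 2 * δ < g (x (2 * i + 1)) - g (x (2 * i)) ∧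
      2 * δ < g (x (2 * i + 1)) - g (x (2 * i + 2)) ∧ 2 * δ < g (x (2 * i + 1)) - g (x 0) := by
    have h1 : ∀ a > 0, ∀ᶠ δ in nhdsWithin (0:ℝ) (Set.Ioi 0), 2 * δ < a := by
      intro a ha
      filter_upwards [Ioo_mem_nhdsGT (show 0 < a / 2 by linarith)] with δ hd
      linarith [hd.2]
    have h2 : ∀ᶠ δ in nhdsWithin (0:ℝ) (Set.Ioi 0), ∀ i ∈ Finset.range (k + 2),
        2 * δ < g (x (2 * i + 1)) - g (x (2 * i)) ∧
        2 * δ < g (x (2 * i + 1)) - g (x (2 * i + 2)) ∧ 2 * δ < g (x (2 * i + 1)) - g (x 0) := by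
      rw [Filter.eventually_all_finset]
      intro i hi
      rw [Finset.mem_range] at hi
      exact (h1 _ (sub_pos.2 (inc i hi))).and ((h1 _ (sub_pos.2 (dec i hi))).and
        (h1 _ (sub_pos.2 (C.low i hi))))
    obtain ⟨δ, h3, h4⟩ := (h2.and self_mem_nhdsWithin).exists
    exact ⟨δ, h4, h3⟩
  simp only [Finset.mem_range] at hδb
  set w : ℕ → ℝ := fun i => if Even i then g (x i) + δ else g (x i) - δ with hw
  have we : ∀ i, w (2 * i) = g (x (2 * i)) + δ := fun i => by simp [hw]
  have we2 : ∀ i, w (2 * i + 2) = g (x (2 * i + 2)) + δ := fun i => we (i + 1)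
  have wo : ∀ i, w (2 * i + 1) = g (x (2 * i + 1)) - δ := fun i => by simp [hw]
  have w0 : w 0 = g (x 0) + δ := we 0
  have w3 : w 3 = g (x 3) - δ := wo 1
  have gcl : g (x (2 * (k + 2))) = g (x 0) := by rw [C.close, C.per]
  obtain ⟨H, sH, H0, HN, Hi, Hd⟩ := interp (2 * k + 1) (fun i => x (i + 3)) (fun i => w (i + 3))
    (fun i hi => C.mono (i + 3) (by omega))
  have x01 := C.mono 0 (by omega)
  have x12 := C.mono 1 (by omega)
  have x23 := C.mono 2 (by omega)
  simp only [zero_add, Nat.reduceAdd] at x01 x12 x23 H0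
  have b0 := hδb 0 (by omega)
  have b1 := hδb 1 (by omega)
  simp only [mul_zero, zero_add, mul_one, Nat.reduceAdd] at b0 b1
  have hD : 0 < w 3 - w 0 := by rw [w3, w0]; linarith
  obtain ⟨ε, hε, hε1, hε2, hε3⟩ : ∃ ε : ℝ, 0 < ε ∧ ε < 1 ∧ (w 3 - w 0) * ε < g (x 1) - w 0 ∧
      (w 3 - w 0) * ε < w 3 - g (x 2) := by
    have hp1 : 0 < g (x 1) - w 0 := by rw [w0]; linarith
    have hp2 : 0 < w 3 - g (x 2) := by rw [w3]; linarith
    have h1 : ∀ a > 0, ∀ᶠ ε in nhdsWithin (0:ℝ) (Set.Ioi 0), (w 3 - w 0) * ε < a := by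
      intro a ha
      filter_upwards [Ioo_mem_nhdsGT (show 0 < a / (w 3 - w 0) by positivity)] with ε hd
      have := hd.2
      rw [lt_div_iff₀ hD] at this
      linarith
    obtain ⟨ε, ⟨h2, h3⟩, h4⟩ := (((h1 _ hp1).and (h1 _ hp2)).and (Ioo_mem_nhdsGT one_pos)).exists
    exact ⟨ε, h4.1, h4.2, h2, h3⟩
  set E : ℝ → ℝ := fun t => (1 - ε) * T ((t - x 1) / (x 2 - x 1)) + ε * T ((t - x 0) / (x 3 - x 0)) with hE
  have sE : ContDiff ℝ (⊤ : ℕ∞) E :=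
    (contDiff_const.mul (sT.comp ((contDiff_id.sub contDiff_const).div_const _))).add
      (contDiff_const.mul (sT.comp ((contDiff_id.sub contDiff_const).div_const _)))
  have l12 : 0 < x 2 - x 1 := by linarith
  have l03 : 0 < x 3 - x 0 := by linarith
  have Tlo : ∀ a b t : ℝ, 0 < b - a → t ≤ a → T ((t - a) / (b - a)) = 0 := fun a b t h1 h2 =>
    T0 _ (div_nonpos_of_nonpos_of_nonneg (by linarith) h1.le)
  have Thi : ∀ a b t : ℝ, 0 < b - a → b ≤ t → T ((t - a) / (b - a)) = 1 := fun a b t h1 h2 =>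
    T1 _ (by rw [le_div_iff₀ h1]; linarith)
  have Tmono : Monotone T := monotone_of_deriv_nonneg (sT.differentiable (by simp)) Tnn
  have Tle : ∀ u, T u ≤ 1 := fun u => by
    rw [← T1 (max u 1) (le_max_right _ _)]; exact Tmono (le_max_left _ _)
  have Tge : ∀ u, 0 ≤ T u := fun u => by
    rw [← T0 (min u 0) (min_le_right _ _)]; exact Tmono (min_le_left _ _)
  have E0 : ∀ t ≤ x 0, E t = 0 := fun t ht => by
    simp only [hE]; rw [Tlo _ _ _ l12 (by linarith), Tlo _ _ _ l03 ht]; ring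
  have E1 : ∀ t, x 3 ≤ t → E t = 1 := fun t ht => by
    simp only [hE]; rw [Thi _ _ _ l12 (by linarith), Thi _ _ _ l03 ht]; ring
  have Ex1 : E (x 1) ≤ ε := by
    simp only [hE]; rw [Tlo _ _ _ l12 le_rfl]
    nlinarith [Tle ((x 1 - x 0) / (x 3 - x 0))]
  have Ex2 : 1 - ε ≤ E (x 2) := by
    simp only [hE]; rw [Thi _ _ _ l12 le_rfl]
    nlinarith [Tge ((x 2 - x 0) / (x 3 - x 0))]
  have Ed : ∀ t ∈ Set.Ioo (x 0) (x 3), 0 < deriv E t := by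
    intro t ht
    have hd : ∀ a b : ℝ, HasDerivAt (fun t => T ((t - a) / (b - a)))
      (deriv T ((t - a) / (b - a)) * (1 / (b - a))) t := fun a b =>
      (hder sT _).comp t (((hasDerivAt_id t).sub_const a).div_const _)
    have h1 : HasDerivAt E _ t := ((hd (x 1) (x 2)).const_mul (1 - ε)).add ((hd (x 0) (x 3)).const_mul ε)
    rw [h1.deriv]
    have h2 := Tnn ((t - x 1) / (x 2 - x 1))
    have h3 := Tpos ((t - x 0) / (x 3 - x 0)) ⟨div_pos (by linarith [ht.1]) l03, by
      rw [div_lt_one l03]; linarith [ht.2]⟩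
    have h4 : 0 < 1 - ε := by linarith
    positivity
  set P : ℝ → ℝ := fun t => H t - (w 3 - w 0) * (1 - E t) with hP
  have sP : ContDiff ℝ (⊤ : ℕ∞) P := sH.sub (contDiff_const.mul (contDiff_const.sub sE))
  have hx3 : x 3 ≤ x (2 * (k + 2)) := seq_le C.mono (by omega) le_rfl
  have Phi : ∀ t, x 3 ≤ t → P t = H t := fun t ht => by simp [hP, E1 t ht]
  have Plo : ∀ t ≤ x 3, P t = w 0 + (w 3 - w 0) * E t := fun t ht => by
    simp only [hP]; rw [H0 t ht]; ring
  obtain ⟨G, sG, pG, hG⟩ := periodize (x0 := x 0) (c := w 0) sP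
    (fun t ht => by rw [Plo t (by linarith), E0 t ht]; ring)
    (fun t ht => by
      rw [← C.close] at ht
      rw [Phi t (by linarith), HN t (show x (2 * k + 1 + 3) ≤ t from ht)]
      change w (2 * (k + 2)) = w 0
      rw [we, w0, gcl])
  rw [← C.close] at hG
  have xm : ∀ i ≤ 2 * (k + 2), x i ∈ Set.Icc (x 0) (x (2 * (k + 2))) := fun i hi =>
    ⟨seq_le C.mono (Nat.zero_le _) hi, seq_le C.mono hi le_rfl⟩
  have Gd : ∀ t ∈ Set.Ioo (x 0) (x (2 * (k + 2))), deriv G t = deriv P t := by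
    intro t ht
    apply Filter.EventuallyEq.deriv_eq
    filter_upwards [Ioo_mem_nhds ht.1 ht.2] with s hs
    exact hG s ⟨hs.1.le, hs.2.le⟩
  have Gx : ∀ i, i + 3 ≤ 2 * (k + 2) → G (x (i + 3)) = w (i + 3) := by
    intro i hi
    rw [hG _ (xm _ hi), Phi _ (seq_le C.mono (by omega) hi)]
    exact Hi i (by omega)
  have Gx0 : G (x 0) = w 0 := by
    rw [hG _ (xm 0 (by omega)), Plo _ (by linarith), E0 _ le_rfl]; ring
  have Gd1 : ∀ t ∈ Set.Ioo (x 0) (x 3), 0 < deriv G t := by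
    intro t ht
    rw [Gd t ⟨ht.1, lt_of_lt_of_le ht.2 hx3⟩]
    have h1 : HasDerivAt (fun t => w 0 + (w 3 - w 0) * E t) ((w 3 - w 0) * deriv E t) t :=
      ((hder sE t).const_mul _).const_add _
    have h2 : P =ᶠ[nhds t] fun t => w 0 + (w 3 - w 0) * E t := by
      filter_upwards [Iio_mem_nhds ht.2] with s hs
      exact Plo s (le_of_lt hs)
    rw [h2.deriv_eq, h1.deriv]
    exact mul_pos hD (Ed t ht)
  have Gd2 : ∀ i, i + 4 ≤ 2 * (k + 2) → ∀ t ∈ Set.Ioo (x (i + 3)) (x (i + 4)),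
      ∃ p > 0, deriv G t = (w (i + 4) - w (i + 3)) * p := by
    intro i hi t ht
    have h3 : x 3 ≤ x (i + 3) := seq_le C.mono (by omega) (by omega)
    rw [Gd t ⟨lt_of_le_of_lt (xm (i + 3) (by omega)).1 ht.1, lt_of_lt_of_le ht.2 (xm (i + 4) hi).2⟩]
    have h2 : P =ᶠ[nhds t] H := by
      filter_upwards [Ioi_mem_nhds ht.1] with s hs
      exact Phi s (h3.trans (le_of_lt hs))
    rw [h2.deriv_eq]
    exact Hd i (by omega) t ht
  have ys : ∀ i, shiftSeq x (i + 1) = x (i + 3) := fun i => by simp [shiftSeq]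
  have y0 : shiftSeq x 0 = x 0 := by simp [shiftSeq]
  refine ⟨G, ⟨sG, pG, ?_, ?_, ?_, ?_, ?_⟩, ?_, ?_⟩
  · intro i hi
    rcases i with _ | i
    · rw [ys 0, y0]; linarith
    · rw [ys, ys]; exact C.mono (i + 3) (by omega)
  · rw [y0, ← C.close]
    exact ys (2 * k + 1)
  · intro i hi t ht
    rcases i with _ | i
    · exact Gd1 t ht
    · have e1 : shiftSeq x (2 * (i + 1)) = x (2 * i + 1 + 3) := ys (2 * i + 1)
      have e2 : shiftSeq x (2 * (i + 1) + 1) = x (2 * i + 1 + 4) := ys (2 * i + 1 + 1)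
      rw [e1, e2] at ht
      obtain ⟨p, hp, he⟩ := Gd2 (2 * i + 1) (by omega) t ht
      rw [he]
      apply mul_pos _ hp
      have h1 : w (2 * i + 1 + 4) = _ := wo (i + 2)
      have h2 : w (2 * i + 1 + 3) = _ := we (i + 2)
      rw [h1, h2]
      linarith [(hδb (i + 2) (by omega)).1]
  · intro i hi t ht
    have e1 : shiftSeq x (2 * i + 1) = x (2 * i + 3) := ys (2 * i)
    have e2 : shiftSeq x (2 * i + 2) = x (2 * i + 4) := ys (2 * i + 1)
    rw [e1, e2] at ht
    obtain ⟨p, hp, he⟩ := Gd2 (2 * i) (by omega) t ht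
    rw [he]
    apply mul_neg_of_neg_of_pos _ hp
    have h1 : w (2 * i + 4) = _ := we (i + 2)
    have h2 : w (2 * i + 3) = _ := wo (i + 1)
    rw [h1, h2]
    have := (hδb (i + 1) (by omega)).2.1
    have e3 : 2 * (i + 1) + 2 = 2 * (i + 2) := by ring
    rw [e3] at this
    linarith
  · intro i hi
    rw [y0, ys, Gx0, Gx _ (by omega), w0]
    have h2 : w (2 * i + 3) = _ := wo (i + 1)
    rw [h2]
    linarith [(hδb (i + 1) (by omega)).2.2]
  · intro i hi
    rcases i with _ | i
    · change G (x 1) < g (x 1)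
      rw [hG _ (xm 1 (by omega)), Plo _ (by linarith)]
      nlinarith
    · have h1 := Gx (2 * i) (by omega)
      have h2 : w (2 * i + 3) = _ := wo (i + 1)
      rw [h2] at h1
      change G (x (2 * (i + 1) + 1)) = _ at h1
      rw [h1]; linarith
  · intro i hi
    rcases i with _ | _ | i
    · change g (x 0) < G (x 0)
      rw [Gx0, w0]; linarith
    · change g (x 2) < G (x 2)
      rw [hG _ (xm 2 (by omega)), Plo _ (by linarith)]
      nlinarith
    · have h1 := Gx (2 * i + 1) (by omega)
      have h2 : w (2 * i + 1 + 3) = _ := we (i + 2)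
      rw [h2] at h1
      change G (x (2 * (i + 2))) = _ at h1
      change _ < G (x (2 * (i + 2)))
      rw [h1]; linarith

lemma Cls.arc {k : ℕ} {g : ℝ → ℝ} {x : ℕ → ℝ} (C : Cls k g x) (t : ℝ) :
    ∃ s, sphPt t = sphPt s ∧ ∃ i < 2 * k, s = x i ∨ s ∈ Set.Ioo (x i) (x (i + 1)) := by
  obtain ⟨s, hs, he⟩ := reduce (x 0) t
  rw [← C.close] at hs
  obtain ⟨i, hi, h1, h2⟩ := locate x (2 * k) hs.1 hs.2
  refine ⟨s, he, i, hi, ?_⟩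
  rcases h1.eq_or_lt with h | h
  · exact Or.inl h.symm
  · exact Or.inr ⟨h, h2⟩

lemma Cls.ne {k : ℕ} {g : ℝ → ℝ} {x : ℕ → ℝ} (C : Cls k g x) {i : ℕ} (hi : i < 2 * k) {s : ℝ}
    (hs : s ∈ Set.Ioo (x i) (x (i + 1))) : deriv g s ≠ 0 := by
  obtain ⟨j, rfl | rfl⟩ := i.even_or_odd'
  · exact (C.up j (by omega) s hs).ne'
  · exact (C.dn j (by omega) s hs).ne

lemma Cls.crit {k : ℕ} {g : ℝ → ℝ} {x : ℕ → ℝ} (C : Cls k g x) {t : ℝ} (h : deriv g t = 0) :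
    ∃ i < 2 * k, sphPt t = sphPt (x i) := by
  obtain ⟨s, he, i, hi, rfl | hs⟩ := C.arc t
  · exact ⟨i, hi, he⟩
  · rw [periodic_eq (per_deriv C.per) he] at h
    exact absurd h (C.ne hi hs)

lemma base {g : ℝ → ℝ} {x : ℕ → ℝ} (C : Cls 1 g x) :
    ∃ κ : ℝ → ℝ, ContDiff ℝ (⊤ : ℕ∞) κ ∧ Function.Periodic κ (2 * Real.pi) ∧ DExt g κ 0 ∧
      0 < κ (x 1) ∧ κ (x 0) < 0 := by
  have x01 : x 0 < x 1 := C.mono 0 (by omega)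
  have x12 : x 1 < x 2 := C.mono 1 (by omega)
  have x2 : x 2 = x 0 + 2 * Real.pi := C.close
  have up := C.up 0 (by omega)
  have dn := C.dn 0 (by omega)
  have low := C.low 0 (by omega)
  simp only [mul_zero, zero_add] at up dn low
  have gc : Continuous g := C.sm.continuous
  have hg2 : g (x 2) = g (x 0) := by rw [x2, C.per]
  have M1 : StrictMonoOn g (Set.Icc (x 0) (x 1)) :=
    strictMonoOn_of_deriv_pos (convex_Icc _ _) gc.continuousOn (by rw [interior_Icc]; exact up)
  have M2 : StrictAntiOn g (Set.Icc (x 1) (x 2)) :=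
    strictAntiOn_of_deriv_neg (convex_Icc _ _) gc.continuousOn (by rw [interior_Icc]; exact dn)
  obtain ⟨c, hc⟩ : ∃ c, c = (g (x 0) + g (x 1)) / 2 := ⟨_, rfl⟩
  obtain ⟨t1, ht1, e1⟩ := intermediate_value_Ioo x01.le gc.continuousOn
    (show c ∈ Set.Ioo (g (x 0)) (g (x 1)) from ⟨by linarith, by linarith⟩)
  obtain ⟨t2, ht2, e2⟩ := intermediate_value_Ioo' x12.le gc.continuousOn
    (show c ∈ Set.Ioo (g (x 2)) (g (x 1)) from ⟨by linarith, by linarith⟩)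
  have pos : ∀ t ∈ Set.Ioo t1 t2, c < g t := by
    intro t ht
    rcases le_total t (x 1) with h | h
    · rw [← e1]; exact M1 ⟨ht1.1.le, ht1.2.le⟩ ⟨(ht1.1.trans ht.1).le, h⟩ ht.1
    · rw [← e2]; exact M2 ⟨h, (ht.2.trans ht2.2).le⟩ ⟨ht2.1.le, ht2.2.le⟩ ht.2
  have neg1 : ∀ t, x 0 ≤ t → t < t1 → g t < c := by
    intro t h0 h1
    rw [← e1]; exact M1 ⟨h0, by linarith [ht1.2]⟩ ⟨ht1.1.le, ht1.2.le⟩ h1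
  have neg2 : ∀ t, t ≤ x 2 → t2 < t → g t < c := by
    intro t h0 h1
    rw [← e2]; exact M2 ⟨ht2.1.le, ht2.2.le⟩ ⟨by linarith [ht2.1], h0⟩ h1
  have hpi := Real.pi_pos
  obtain ⟨h11, h12⟩ := ht1
  obtain ⟨h21, h22⟩ := ht2
  obtain ⟨b, hb⟩ : ∃ b, b = (t1 + t2) / 2 := ⟨_, rfl⟩
  have hgb : c < g b := pos b ⟨by linarith, by linarith⟩
  have hgb' : g (b + Real.pi) < c := by
    rcases le_total (b + Real.pi) (x 2) with h | h
    · exact neg2 _ h (by linarith)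
    · have := neg1 (b + Real.pi - 2 * Real.pi) (by linarith) (by linarith)
      rwa [C.per.sub_eq] at this
  have sd : ContDiff ℝ (⊤ : ℕ∞) (deriv g) := by
    have := C.sm.iterate_deriv 1
    simpa using this
  have zer : ∀ s, g s = c → 0 < deriv g s * (-Real.sin (s - b)) := by
    intro t ht
    obtain ⟨s, hs, he⟩ := reduce (x 0) t
    have e3 : g t = g s := periodic_eq C.per he
    have e4 : deriv g t * (-Real.sin (t - b)) = deriv g s * (-Real.sin (s - b)) := by
      refine periodic_eq (G := fun t => deriv g t * (-Real.sin (t - b))) ?_ he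
      intro u
      simp only
      rw [per_deriv C.per, show u + 2 * Real.pi - b = u - b + 2 * Real.pi by ring, Real.sin_add_two_pi]
    rw [e4]
    rw [e3] at ht
    rw [← x2] at hs
    have hsin : 0 < Real.sin ((t2 - t1) / 2) :=
      Real.sin_pos_of_pos_of_lt_pi (by linarith) (by linarith)
    rcases lt_trichotomy s t1 with h | h | h
    · linarith [neg1 s hs.1 h]
    · subst h
      rw [show s - b = -((t2 - s) / 2) by rw [hb]; ring, Real.sin_neg, neg_neg]
      exact mul_pos (up s ⟨h11, h12⟩) hsin
    · rcases lt_trichotomy s t2 with h' | h' | h'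
      · linarith [pos s ⟨h, h'⟩]
      · subst h'
        rw [show s - b = ((s - t1) / 2) by rw [hb]; ring]
        have := dn s ⟨h21, h22⟩
        nlinarith
      · linarith [neg2 s hs.2.le h']
  obtain ⟨ε0, hε0, hε⟩ := per_bound (p := fun t => deriv g t * (-Real.sin (t - b)))
    (q := fun t => |g t - c|) (by have := sd.continuous; fun_prop) (by fun_prop)
    (by
      intro u
      simp only
      rw [per_deriv C.per, show u + 2 * Real.pi - b = u - b + 2 * Real.pi by ring, Real.sin_add_two_pi])
    (by intro u; simp only; rw [C.per])
    (by
      intro t ht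
      rw [abs_pos]
      intro h
      linarith [zer t (by linarith)])
  obtain ⟨ε, hεp, hεa, hεb⟩ : ∃ ε > 0, ε < ε0 ∧ ε < (g (x 1) - g (x 0)) / 2 := by
    refine ⟨min (ε0 / 2) ((g (x 1) - g (x 0)) / 4), by apply lt_min <;> linarith, ?_, ?_⟩
    · linarith [min_le_left (ε0 / 2) ((g (x 1) - g (x 0)) / 4)]
    · linarith [min_le_right (ε0 / 2) ((g (x 1) - g (x 0)) / 4)]
  have hc1 : ∀ t, ε * Real.cos (t - b) ≤ ε := fun t => by nlinarith [Real.cos_le_one (t - b)]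
  have hc2 : ∀ t, -ε ≤ ε * Real.cos (t - b) := fun t => by nlinarith [Real.neg_one_le_cos (t - b)]
  have pcos : Function.Periodic (fun t => ε * Real.cos (t - b)) (2 * Real.pi) := by
    intro u
    simp only
    rw [show u + 2 * Real.pi - b = u - b + 2 * Real.pi by ring, Real.cos_add_two_pi]
  have pcos' : ∀ u, ε * Real.cos (u + 2 * Real.pi - b) = ε * Real.cos (u - b) := pcos
  have scos : ContDiff ℝ (⊤ : ℕ∞) (fun t => ε * Real.cos (t - b)) :=
    contDiff_const.mul (Real.contDiff_cos.comp (contDiff_id.sub contDiff_const))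
  have d1 : ∀ t, deriv (fun t => c + ε * Real.cos (t - b)) t = ε * (-Real.sin (t - b)) := by
    intro t
    have : HasDerivAt (fun t => c + ε * Real.cos (t - b)) (ε * (-Real.sin (t - b) * 1)) t :=
      ((((hasDerivAt_id t).sub_const b).cos).const_mul ε).const_add c
    rw [this.deriv, mul_one]
  have D1 : DExt (fun t => c + ε * Real.cos (t - b)) (fun t => ε * Real.cos (t - b)) 0 := by
    have hF : ∀ y : E2, HasFDerivAt (fun y : E2 => c + ε * inner ℝ (sphPt b) y)
      (ε • innerSL ℝ (sphPt b)) y := fun y =>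
      (((innerSL ℝ (sphPt b)).hasFDerivAt (x := y)).const_mul ε).const_add c
    refine ⟨fun y => c + ε * inner ℝ (sphPt b) y, fun r => r - 1, 1 / 2, by norm_num, by norm_num,
      ?_, contDiff_id.sub contDiff_const, by simp, ?_, ?_, ?_⟩
    · exact contDiff_const.add (contDiff_const.mul (innerSL ℝ (sphPt b)).contDiff)
    · intro r _; simp
    · intro r _ t
      simp only
      rw [inner_smul_right, PiLp.inner_apply, Fin.sum_univ_two]
      simp only [sphPt_zero, sphPt_one, Real.cos_sub]
      simp
      ring
    · rw [nonpos_iff_eq_zero, Set.encard_eq_zero, Set.eq_empty_iff_forall_notMem]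
      rintro y ⟨_, hy⟩
      rw [(hF y).fderiv] at hy
      have := congrArg (fun L : E2 →L[ℝ] ℝ => L (sphPt b)) hy
      simp [norm_sphPt] at this
      linarith
  have S := step (g := g) (j := 0) D1 C.sm (contDiff_const.add scos) scos C.per
    (by intro u; simp only [pcos' u]) pcos ?_ ?_ ?_
  · refine ⟨_, ?_, ?_, by simpa using S, ?_, ?_⟩
    · exact C.sm.sub (contDiff_const.add scos)
    · intro u; simp only [pcos' u, C.per u]
    · linarith [hc1 (x 1)]
    · linarith [hc2 (x 0)]
  · intro t ht
    rw [d1] at ht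
    have hs : Real.sin (t - b) = 0 := by
      rcases mul_eq_zero.1 ht with h | h
      · linarith
      · linarith
    have hq := hε t (by rw [hs]; simp)
    rcases (Real.sin_eq_zero_iff_cos_eq.1 hs) with h | h
    · obtain ⟨m, hm⟩ := (Real.cos_eq_one_iff _).1 h
      have : g t = g b := by
        rw [show t = b + m * (2 * Real.pi) by linarith]; exact C.per.int_mul m b
      rw [h, this]
      rw [this] at hq
      rw [abs_of_pos (by linarith)] at hq
      nlinarith
    · have h' : Real.cos (t - b - Real.pi) = 1 := by rw [Real.cos_sub_pi, h]; simp
      obtain ⟨m, hm⟩ := (Real.cos_eq_one_iff _).1 h'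
      have : g t = g (b + Real.pi) := by
        rw [show t = b + Real.pi + m * (2 * Real.pi) by linarith]; exact C.per.int_mul m _
      rw [h, this]
      rw [this] at hq
      rw [abs_of_neg (by linarith)] at hq
      nlinarith
  · intro t ht h
    have hq := hε t (by rw [ht]; simp)
    rw [h] at hq
    have : |c + ε * Real.cos (t - b) - c| ≤ ε := abs_le.2 ⟨by linarith [hc2 t], by linarith [hc1 t]⟩
    linarith
  · rw [nonpos_iff_eq_zero, Set.encard_eq_zero, Set.eq_empty_iff_forall_notMem]
    rintro _ ⟨t, rfl, h, h2⟩
    rw [d1] at h2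
    have hq := hε t (by nlinarith)
    rw [h] at hq
    have : |c + ε * Real.cos (t - b) - c| ≤ ε := abs_le.2 ⟨by linarith [hc2 t], by linarith [hc1 t]⟩
    linarith

lemma main_ind : ∀ (k : ℕ) (g : ℝ → ℝ) (x : ℕ → ℝ), Cls (k + 1) g x →
    ∃ κ : ℝ → ℝ, ContDiff ℝ (⊤ : ℕ∞) κ ∧ Function.Periodic κ (2 * Real.pi) ∧ DExt g κ (k : ℕ∞) ∧
      (∀ i ≤ k, 0 < κ (x (2 * i + 1))) ∧ (∀ i ≤ k, κ (x (2 * i)) < 0) := by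
  intro k
  induction k with
  | zero =>
    intro g x C
    obtain ⟨κ, h1, h2, h3, h4, h5⟩ := base C
    refine ⟨κ, h1, h2, by simpa using h3, ?_, ?_⟩
    · intro i hi; rw [Nat.le_zero.1 hi]; exact h4
    · intro i hi; rw [Nat.le_zero.1 hi]; exact h5
  | succ k ih =>
    intro g x C
    obtain ⟨g1, C1, ho, he⟩ := pair C
    obtain ⟨κ1, sk, pk, D, ko, ke⟩ := ih g1 _ C1
    have ys : ∀ i, shiftSeq x (i + 1) = x (i + 3) := fun i => by simp [shiftSeq]
    have y0 : shiftSeq x 0 = x 0 := by simp [shiftSeq]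
    refine ⟨fun t => g t - g1 t, C.sm.sub C1.sm, ?_, ?_, ?_, ?_⟩
    · intro t; simp only; rw [C.per, C1.per]
    · push_cast
      refine step D C.sm C1.sm sk C.per C1.per pk ?_ ?_ ?_
      · intro t ht
        obtain ⟨i, hi, hs⟩ := C1.crit ht
        rw [periodic_eq pk hs, periodic_eq C.per hs, periodic_eq C1.per hs]
        obtain ⟨j, rfl | rfl⟩ := i.even_or_odd'
        · have h1 := ke j (by omega)
          refine mul_pos_of_neg_of_neg h1 ?_
          rcases j with _ | j
          · have := he 0 (by omega)
            simp only [mul_zero, y0] at this ⊢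
            linarith
          · have := he (j + 2) (by omega)
            have e : shiftSeq x (2 * (j + 1)) = x (2 * (j + 2)) := ys (2 * j + 1)
            rw [e]; linarith
        · have h1 := ko j (by omega)
          refine mul_pos h1 ?_
          have := ho (j + 1) (by omega)
          have e : shiftSeq x (2 * j + 1) = x (2 * (j + 1) + 1) := ys (2 * j)
          rw [e]; linarith
      · intro t ht
        obtain ⟨i, hi, hs⟩ := C.crit ht
        rw [periodic_eq C.per hs, periodic_eq C1.per hs]
        obtain ⟨j, rfl | rfl⟩ := i.even_or_odd'
        · exact (he j (by omega)).ne
        · exact (ho j (by omega)).ne'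
      · have up1 : ∀ t ∈ Set.Ioo (x 0) (x 3), 0 < deriv g1 t := by
          have := C1.up 0 (by omega)
          simp only [mul_zero] at this
          rwa [y0, ys 0] at this
        have x01 : x 0 < x 1 := C.mono 0 (by omega)
        have x12 : x 1 < x 2 := C.mono 1 (by omega)
        have x23 : x 2 < x 3 := C.mono 2 (by omega)
        have key : ∀ t, g t = g1 t → deriv g t * deriv g1 t < 0 →
            ∃ s ∈ Set.Ioo (x 1) (x 2), sphPt t = sphPt s ∧ g s = g1 s := by
          intro t h1 h2
          obtain ⟨s, hs, i, hi, h⟩ := C.arc t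
          rw [periodic_eq C.per hs, periodic_eq C1.per hs] at h1
          rw [periodic_eq (per_deriv C.per) hs, periodic_eq (per_deriv C1.per) hs] at h2
          rcases h with rfl | h
          · exfalso
            obtain ⟨j, rfl | rfl⟩ := i.even_or_odd'
            · exact (he j (by omega)).ne h1
            · exact (ho j (by omega)).ne' h1
          · rcases i with _ | _ | _ | i
            · have a1 := C.up 0 (by omega) s h
              have a2 := up1 s ⟨h.1, by linarith [h.2]⟩
              nlinarith
            · exact ⟨s, h, hs, h1⟩
            · have a1 := C.up 1 (by omega) s h
              have a2 := up1 s ⟨by linarith [h.1], h.2⟩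
              nlinarith
            · exfalso
              obtain ⟨l, rfl | rfl⟩ := i.even_or_odd'
              · have a1 := C.dn (l + 1) (by omega) s h
                have a2 := C1.dn l (by omega) s (by rw [ys (2 * l), ys (2 * l + 1)]; exact h)
                nlinarith
              · have a1 := C.up (l + 2) (by omega) s h
                have a2 := C1.up (l + 1) (by omega) s
                  (by
                    have e : shiftSeq x (2 * (l + 1)) = x (2 * l + 1 + 3) := ys (2 * l + 1)
                    rw [e, ys (2 * (l + 1))]; exact h)
                nlinarith
        have anti : StrictAntiOn (fun t => g t - g1 t) (Set.Icc (x 1) (x 2)) := by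
          refine strictAntiOn_of_deriv_neg (convex_Icc _ _)
            (C.sm.continuous.sub C1.sm.continuous).continuousOn ?_
          rw [interior_Icc]
          intro s hs
          have a1 := C.dn 0 (by omega) s hs
          have a2 := up1 s ⟨by linarith [hs.1], by linarith [hs.2]⟩
          have hd : HasDerivAt (fun t => g t - g1 t) (deriv g s - deriv g1 s) s :=
            (hder C.sm s).sub (hder C1.sm s)
          rw [hd.deriv]
          linarith
        rw [Set.encard_le_one_iff]
        rintro _ _ ⟨t, rfl, h1, h2⟩ ⟨t', rfl, h3, h4⟩
        obtain ⟨s, hs, e1, e2⟩ := key t h1 h2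
        obtain ⟨s', hs', e3, e4⟩ := key t' h3 h4
        rw [e1, e3]
        congr 1
        exact anti.injOn ⟨hs.1.le, hs.2.le⟩ ⟨hs'.1.le, hs'.2.le⟩ (by simp [e2, e4])
    · intro i hi
      have := ho i (by omega)
      simp only; linarith
    · intro i hi
      have := he i (by omega)
      simp only; linarith

lemma loc_pos {h : ℝ → ℝ} {a : ℝ} (ha : h a = 0) (hd : 0 < deriv h a) :
    (∀ᶠ t in nhdsWithin a (Set.Ioi a), 0 < h t) ∧ (∀ᶠ t in nhdsWithin a (Set.Iio a), h t < 0) := by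
  have := eventually_nhdsWithin_sign_eq_of_deriv_pos hd ha
  constructor
  · filter_upwards [nhdsWithin_le_nhds this, self_mem_nhdsWithin] with t h1 h2
    rw [sign_pos (sub_pos.2 h2)] at h1
    exact sign_eq_one_iff.1 h1
  · filter_upwards [nhdsWithin_le_nhds this, self_mem_nhdsWithin] with t h1 h2
    rw [sign_neg (sub_neg.2 h2)] at h1
    exact sign_eq_neg_one_iff.1 h1

lemma arc_sign {h : ℝ → ℝ} {a b : ℝ} (hab : a < b) (hc : Continuous h) (ha : h a = 0) (hb : h b = 0)
    (da : 0 < deriv h a) (db : deriv h b ≠ 0) (hn : ∀ t ∈ Set.Ioo a b, h t ≠ 0) :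
    (∀ t ∈ Set.Ioo a b, 0 < h t) ∧ deriv h b < 0 := by
  obtain ⟨s, s1, s2⟩ := ((loc_pos ha da).1.and (Ioo_mem_nhdsGT hab)).exists
  have P : ∀ t ∈ Set.Ioo a b, 0 < h t := by
    intro t ht
    by_contra hcon
    have hI : Set.OrdConnected (Set.Ioo a b) := Set.ordConnected_Ioo
    have := (isPreconnected_Ioo (a := a) (b := b)).intermediate_value ht s2 hc.continuousOn
    obtain ⟨u, hu, hu0⟩ := this ⟨not_lt.1 hcon, s1.le⟩
    exact hn u hu hu0
  refine ⟨P, ?_⟩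
  by_contra hcon
  have : 0 < deriv h b := lt_of_le_of_ne (not_lt.1 hcon) db.symm
  obtain ⟨u, u1, u2⟩ := ((loc_pos hb this).2.and (Ioo_mem_nhdsLT hab)).exists
  exact absurd (P u u2) (not_lt.2 u1.le)

lemma arc_sign' {h : ℝ → ℝ} {a b : ℝ} (hab : a < b) (hc : Continuous h) (ha : h a = 0) (hb : h b = 0)
    (da : deriv h a < 0) (db : deriv h b ≠ 0) (hn : ∀ t ∈ Set.Ioo a b, h t ≠ 0) :
    (∀ t ∈ Set.Ioo a b, h t < 0) ∧ 0 < deriv h b := by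
  have := arc_sign (h := fun t => - h t) hab hc.neg (by simpa) (by simpa) (by simpa)
    (by simpa) (by simpa using hn)
  simpa using this

lemma ribbon_cls {k : ℕ} {n : ℕ} (hn : n = 2 * (k + 1)) (a : Ribbon n) :
    ∃ x : ℕ → ℝ, Cls (k + 1) a.g x ∧ (∀ i, 0 < deriv (deriv a.g) (x (2 * i))) ∧
      (∀ i, deriv (deriv a.g) (x (2 * i + 1)) < 0) := by
  have hpi := Real.two_pi_pos
  have n0 := a.n_pos
  set e : ℕ → ℝ := fun i => a.θ ⟨i % n, Nat.mod_lt _ n0⟩ + (i / n : ℕ) * (2 * Real.pi) with he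
  have sp : ∀ i, sphPt (e i) = sphPt (a.θ ⟨i % n, Nat.mod_lt _ n0⟩) := by
    intro i
    have := sphPt_add (a.θ ⟨i % n, Nat.mod_lt _ n0⟩) ((i / n : ℕ) : ℤ)
    rw [Int.cast_natCast] at this
    exact this
  have en : ∀ i, e (i + n) = e i + 2 * Real.pi := by
    intro i
    simp only [he, Nat.add_mod_right, Nat.add_div_right _ n0]
    push_cast; ring
  have emono : StrictMono e := by
    apply strictMono_nat_of_lt_succ
    intro i
    have h1 := Nat.div_add_mod i n
    have h3 := Nat.mod_lt i n0
    rcases Nat.lt_or_ge (i % n + 1) n with h | h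
    · have hm : (i + 1) % n = i % n + 1 := by
        conv_lhs => rw [← h1, add_assoc, Nat.mul_add_mod]
        exact Nat.mod_eq_of_lt h
      have hd : (i + 1) / n = i / n := by
        conv_lhs => rw [← h1, add_assoc, Nat.mul_add_div n0, Nat.div_eq_of_lt h, add_zero]
      simp only [he, hm, hd]
      have := a.theta_mono (show (⟨i % n, h3⟩ : Fin n) < ⟨i % n + 1, h⟩ from Nat.lt_succ_self _)
      linarith
    · have h4 : i + 1 = n * (i / n + 1) := by rw [mul_add]; omega
      have hm : (i + 1) % n = 0 := by rw [h4]; exact Nat.mul_mod_right _ _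
      have hd : (i + 1) / n = i / n + 1 := by rw [h4]; exact Nat.mul_div_cancel_left _ n0
      simp only [he, hm, hd]
      have b1 := (a.theta_mem ⟨i % n, h3⟩).2
      have b2 := (a.theta_mem ⟨0, n0⟩).1
      push_cast
      linarith
  have sd : ContDiff ℝ (⊤ : ℕ∞) (deriv a.g) := by
    have := a.smooth_g.iterate_deriv 1
    simpa using this
  have pd := per_deriv a.periodic_g
  have ec : ∀ i, deriv a.g (e i) = 0 := fun i => by rw [periodic_eq pd (sp i)]; exact a.node_crit _
  have ed : ∀ i, deriv (deriv a.g) (e i) ≠ 0 := fun i => by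
    rw [periodic_eq (per_deriv pd) (sp i)]; exact a.node_nondeg _
  have arcne : ∀ i, ∀ t ∈ Set.Ioo (e i) (e (i + 1)), deriv a.g t ≠ 0 := by
    intro i t ht h0
    obtain ⟨s, hs, hst⟩ := reduce 0 t
    rw [periodic_eq pd hst] at h0
    rw [zero_add] at hs
    obtain ⟨j, rfl⟩ := a.crit_only s hs h0
    obtain ⟨m, rfl⟩ := sphPt_inj hst
    have t0 : 0 < a.θ j + m * (2 * Real.pi) := by
      have h1 : e 0 ≤ e i := emono.monotone (Nat.zero_le _)
      have h2 : 0 ≤ e 0 := by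
        have := (a.theta_mem ⟨0 % n, Nat.mod_lt _ n0⟩).1
        simpa [he] using this
      linarith [ht.1]
    have hm : 0 ≤ m := by
      by_contra hcon
      have : m ≤ -1 := by omega
      have : (m : ℝ) ≤ -1 := by exact_mod_cast this
      nlinarith [hs.2]
    lift m to ℕ using hm
    have : e (j + m * n) = a.θ j + ((m : ℕ) : ℤ) * (2 * Real.pi) := by
      simp only [he, Nat.add_mul_mod_self_right, Nat.add_mul_div_right _ _ n0, Nat.mod_eq_of_lt j.2,
        Nat.div_eq_of_lt j.2, zero_add]
      simp
    rw [← this] at ht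
    have h1 := emono.lt_iff_lt.1 ht.1
    have h2 := emono.lt_iff_lt.1 ht.2
    omega
  have stepP : ∀ i, 0 < deriv (deriv a.g) (e i) →
      (∀ t ∈ Set.Ioo (e i) (e (i + 1)), 0 < deriv a.g t) ∧ deriv (deriv a.g) (e (i + 1)) < 0 :=
    fun i h => arc_sign (emono (Nat.lt_succ_self i)) sd.continuous (ec _) (ec _) h (ed _) (arcne i)
  have stepN : ∀ i, deriv (deriv a.g) (e i) < 0 →
      (∀ t ∈ Set.Ioo (e i) (e (i + 1)), deriv a.g t < 0) ∧ 0 < deriv (deriv a.g) (e (i + 1)) :=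
    fun i h => arc_sign' (emono (Nat.lt_succ_self i)) sd.continuous (ec _) (ec _) h (ed _) (arcne i)
  have decr : ∀ i, deriv (deriv a.g) (e i) < 0 → a.g (e (i + 1)) < a.g (e i) := by
    intro i h
    have hlt := emono (Nat.lt_succ_self i)
    refine strictAntiOn_of_deriv_neg (convex_Icc _ _) a.smooth_g.continuous.continuousOn ?_
      ⟨le_rfl, hlt.le⟩ ⟨hlt.le, le_rfl⟩ hlt
    rw [interior_Icc]; exact (stepN i h).1
  have : Nonempty (Fin n) := ⟨⟨0, n0⟩⟩
  obtain ⟨i0, hi0⟩ := Finite.exists_min (fun i => a.g (a.θ i))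
  have e0 : e i0 = a.θ i0 := by
    simp only [he, Nat.mod_eq_of_lt i0.2, Nat.div_eq_of_lt i0.2]; simp
  have emin : ∀ i, a.g (e i0) ≤ a.g (e i) := by
    intro i
    rw [periodic_eq a.periodic_g (sp i), e0]
    exact hi0 _
  have s0 : 0 < deriv (deriv a.g) (e i0) := by
    rcases (ed i0).lt_or_gt with h | h
    · exact absurd (decr _ h) (not_lt.2 (emin _))
    · exact h
  have se : ∀ i, 0 < deriv (deriv a.g) (e (i0 + 2 * i)) := by
    intro i
    induction i with
    | zero => exact s0
    | succ i ih => exact (stepN _ (stepP _ ih).2).2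
  have so : ∀ i, deriv (deriv a.g) (e (i0 + (2 * i + 1))) < 0 := fun i => (stepP _ (se i)).2
  refine ⟨fun i => e (i0 + i), ⟨a.smooth_g, a.periodic_g, ?_, ?_, ?_, ?_, ?_⟩, se, so⟩
  · intro i _; exact emono (by omega)
  · simp only [← hn, add_zero]; exact en _
  · intro i _; exact (stepP _ (se i)).1
  · intro i _; exact (stepN _ (so i)).1
  · intro i _
    exact lt_of_le_of_lt (emin _) (decr _ (so i))

lemma ribbon_ext {k n : ℕ} (hn : n = 2 * (k + 1)) (a : Ribbon n) (hpos : ∀ i, a.ν i = 1) :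
    ∃ f : E2 → ℝ, IsExtension a f ∧ (critPts f).encard ≤ (k : ℕ∞) := by
  obtain ⟨x, C, se, so⟩ := ribbon_cls hn a
  obtain ⟨κ, sk, pk, ⟨F, β, r0, hr0, hr1, sF, sβ, b1, bd, hF, hc⟩, ko, ke⟩ := main_ind k a.g x C
  have bd1 : 0 < deriv β 1 := bd 1 ⟨hr1, le_rfl⟩
  have F1 : ∀ t, F (sphPt t) = a.g t := by
    intro t
    have := hF 1 hr1 t
    rw [one_smul, b1] at this
    linarith
  have rad : ∀ t, fderiv ℝ F (sphPt t) (sphPt t) = deriv β 1 * κ t := by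
    intro t
    have h1 : HasDerivAt (fun s => a.g t + β s * κ t) (deriv β 1 * κ t) 1 :=
      ((hder sβ 1).mul_const _).const_add _
    have h2 : (fun s : ℝ => F (s • sphPt t)) =ᶠ[nhds 1] fun s => a.g t + β s * κ t := by
      filter_upwards [Ioi_mem_nhds hr1] with s hs
      exact hF s hs t
    have h3 := rad_deriv sF (h1.congr_of_eventuallyEq h2)
    rw [one_smul] at h3
    exact h3.symm
  have sgn : ∀ t, deriv a.g t = 0 → (0 < κ t ∧ deriv (deriv a.g) t < 0) ∨
      (κ t < 0 ∧ 0 < deriv (deriv a.g) t) := by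
    intro t ht
    obtain ⟨i, hi, hs⟩ := C.crit ht
    rw [periodic_eq pk hs, periodic_eq (per_deriv (per_deriv a.periodic_g)) hs]
    obtain ⟨j, rfl | rfl⟩ := i.even_or_odd'
    · exact Or.inr ⟨ke j (by omega), se j⟩
    · exact Or.inl ⟨ko j (by omega), so j⟩
  refine ⟨F, ⟨sF, F1, ?_, ?_⟩, hc⟩
  · intro p hp h0
    have hp1 : ‖p‖ = 1 := by simpa using hp
    have hpp := polar p
    rw [hp1, one_smul] at hpp
    rw [hpp] at h0
    have hg : deriv a.g (ang p) = 0 := by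
      refine ang_deriv_zero (r := 1) (t := ang p) sF (by rw [one_smul]; exact h0) ?_
      simp only [one_smul, F1]
      exact hder a.smooth_g _
    have h1 := rad (ang p)
    rw [h0] at h1
    rcases sgn _ hg with h | h
    · have := mul_pos bd1 h.1
      simp at h1
      rcases h1 with h1 | h1 <;> linarith [h.1]
    · simp at h1
      rcases h1 with h1 | h1 <;> linarith [h.1]
  · intro i
    have h1 : inner ℝ (gradient F (sphPt (a.θ i))) (sphPt (a.θ i)) = deriv β 1 * κ (a.θ i) := by
      rw [← rad, gradient, InnerProductSpace.toDual_symm_apply]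
    rw [h1, hpos i]
    push_cast
    rw [one_mul]
    rcases sgn _ (a.node_crit i) with h | h
    · exact ⟨fun _ => mul_pos bd1 h.1, fun h' => absurd h.2 (not_lt.2 h'.le)⟩
    · exact ⟨fun h' => absurd h.2 (not_lt.2 h'.le), fun _ => mul_neg_of_pos_of_neg bd1 h.1⟩

/-- If all nodes of a ribbon `a` with `n` nodes are positive, then there is an extension of `a`
with at most `n/2 − 1` critical points in the open unit disk; that is, `γ(a) ≤ n/2 − 1`. -/
theorem stmt_2 (n : ℕ) (a : Ribbon n) (hpos : ∀ i, a.ν i = 1) :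
    (∃ f : E2 → ℝ, IsExtension a f ∧ (critPts f).encard ≤ ((n / 2 - 1 : ℕ) : ℕ∞)) ∧
    gammaR a ≤ ((n / 2 - 1 : ℕ) : ℕ∞) := by
  obtain ⟨m, hm⟩ := a.n_even
  have n0 := a.n_pos
  obtain ⟨f, hf, hc⟩ := ribbon_ext (k := n / 2 - 1) (by omega) a hpos
  exact ⟨⟨f, hf, hc⟩, le_trans (sInf_le ⟨f, hf, rfl⟩) hc⟩
end
end

section
/- If a ribbon a admits an extension with no critical points in the open unit disk (that is, γ(a) = 0), then its signature satisfies σ(a) = 2. -/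
open scoped RealInnerProductSpace

noncomputable section

lemma log_lift (F : E2 → ℂ) (hF : Continuous F)
    (h0 : ∀ x : E2, ‖x‖ ≤ 1 → F x ≠ 0) :
    ∃ L : Metric.sphere (0 : E2) 1 → ℂ, Continuous L ∧ ∀ x, Complex.exp (L x) = F x := by
  have hne : ∀ p : unitInterval × Metric.sphere (0 : E2) 1, F ((p.1 : ℝ) • (p.2 : E2)) ≠ 0 := by
    rintro ⟨ρ, x, hx⟩
    apply h0
    have : ‖x‖ = 1 := by simpa using hx
    rw [norm_smul, this, mul_one, Real.norm_eq_abs, abs_of_nonneg ρ.2.1]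
    exact ρ.2.2
  let H : C(unitInterval × Metric.sphere (0 : E2) 1, {z : ℂ // z ≠ 0}) :=
    ⟨fun p => ⟨F ((p.1 : ℝ) • (p.2 : E2)), hne p⟩, by
      refine Continuous.subtype_mk ?_ _
      fun_prop⟩
  let c : C(Metric.sphere (0 : E2) 1, ℂ) := ContinuousMap.const _ (Complex.log (F 0))
  have H_0 : ∀ a, H (0, a) = (fun z : ℂ ↦ (⟨_, z.exp_ne_zero⟩ : {z : ℂ // z ≠ 0})) (c a) := by
    intro a
    apply Subtype.ext
    have : F 0 ≠ 0 := h0 0 (by simp)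
    simp [H, c, Complex.exp_log this]
  let K := Complex.isCoveringMap_exp.liftHomotopy H c H_0
  refine ⟨fun x => K (1, x), K.continuous.comp (by fun_prop), fun x => ?_⟩
  have := congr_fun (Complex.isCoveringMap_exp.liftHomotopy_lifts H c H_0) (1, x)
  have h2 : Complex.exp (K (1, x)) = F (((1 : unitInterval) : ℝ) • (x : E2)) :=
    congrArg Subtype.val this
  rw [h2]
  simp

lemma node_right (B s r P : ℝ → ℝ) (hB : Continuous B) (hP : ∀ t, 0 < P t)
    (hs : ∀ t, s t = P t * Real.sin (B t)) (hr : ∀ t, r t = P t * Real.cos (B t))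
    (t₁ d ν : ℝ) (hd : HasDerivAt s d t₁) (h1 : s t₁ = 0) (hν : ν = 1 ∨ ν = -1)
    (hsg : ν * r t₁ * d < 0) :
    ∀ᶠ t in nhdsWithin t₁ (Set.Ioi t₁), B t₁ - Real.pi * (ν + 1) / 2 < B t ∧
      B t < B t₁ - Real.pi * (ν + 1) / 2 + Real.pi := by
  have hsin : Real.sin (B t₁) = 0 := by
    have := hs t₁; rw [h1] at this
    rcases mul_eq_zero.1 this.symm with h | h
    · exact absurd h (hP _).ne'
    · exact h
  have hslope : ∀ᶠ t in nhdsWithin t₁ (Set.Ioi t₁), ν * r t₁ * (s t / (t - t₁)) < 0 := by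
    have := (hasDerivAt_iff_tendsto_slope.1 hd).const_mul (ν * r t₁)
    have := this.mono_left (nhdsWithin_mono t₁ (fun x (hx : t₁ < x) => hx.ne'))
    filter_upwards [this.eventually_lt_const hsg] with t ht
    simpa [slope_def_field, h1] using ht
  have hnear : ∀ᶠ t in nhdsWithin t₁ (Set.Ioi t₁), |B t - B t₁| < Real.pi := by
    have : ContinuousAt (fun t => |B t - B t₁|) t₁ := by fun_prop
    exact nhdsWithin_le_nhds (this.eventually_lt_const (by simp [Real.pi_pos]))
  filter_upwards [hslope, hnear, self_mem_nhdsWithin] with t h2 h3 h4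
  have h4 : t₁ < t := h4
  have h5 : ν * r t₁ * s t < 0 := by
    have : ν * r t₁ * s t = (ν * r t₁ * (s t / (t - t₁))) * (t - t₁) := by
      field_simp [sub_ne_zero.2 h4.ne']
    rw [this]; exact mul_neg_of_neg_of_pos h2 (by linarith)
  have h6 : ν * Real.sin (B t - B t₁) < 0 := by
    rw [Real.sin_sub, hsin]
    rw [hr, hs] at h5
    have : ν * (P t₁ * Real.cos (B t₁)) * (P t * Real.sin (B t)) =
      (P t₁ * P t) * (ν * (Real.sin (B t) * Real.cos (B t₁) - Real.cos (B t) * 0)) := by ring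
    rw [this] at h5
    exact neg_of_mul_neg_right h5 (mul_pos (hP _) (hP _)).le
  rw [abs_lt] at h3
  rcases hν with rfl | rfl
  · have : B t - B t₁ < 0 := by
      by_contra hc
      have := Real.sin_nonneg_of_nonneg_of_le_pi (not_lt.1 hc) h3.2.le
      linarith
    constructor <;> linarith
  · have : 0 < B t - B t₁ := by
      by_contra hc
      have := Real.sin_nonpos_of_nonpos_of_neg_pi_le (not_lt.1 hc) h3.1.le
      linarith
    constructor <;> linarith

lemma node_left (B s r P : ℝ → ℝ) (hB : Continuous B) (hP : ∀ t, 0 < P t)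
    (hs : ∀ t, s t = P t * Real.sin (B t)) (hr : ∀ t, r t = P t * Real.cos (B t))
    (t₁ d ν : ℝ) (hd : HasDerivAt s d t₁) (h1 : s t₁ = 0) (hν : ν = 1 ∨ ν = -1)
    (hsg : ν * r t₁ * d < 0) :
    ∀ᶠ t in nhdsWithin t₁ (Set.Iio t₁), B t₁ + Real.pi * (ν - 1) / 2 < B t ∧
      B t < B t₁ + Real.pi * (ν - 1) / 2 + Real.pi := by
  have hd' : HasDerivAt (fun t => s (-t)) (-d) (-t₁) := by
    have h : HasDerivAt s d (-(-t₁)) := by simpa using hd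
    have h2 := HasDerivAt.comp (-t₁) h (hasDerivAt_neg (-t₁))
    rw [mul_neg_one] at h2
    exact h2
  have := node_right (fun t => B (-t)) (fun t => s (-t)) (fun t => r (-t)) (fun t => P (-t))
    (by fun_prop) (fun t => hP _) (fun t => hs _) (fun t => hr _) (-t₁) (-d) (-ν) hd'
    (by simpa using h1) (by rcases hν with rfl | rfl <;> simp) (by simpa using hsg)
  have := tendsto_neg_nhdsLT.eventually this
  filter_upwards [this] with t ht
  simp only [neg_neg] at ht
  constructor <;> linarith [ht.1, ht.2]

lemma sin_zero_int {x : ℝ} (h : Real.sin x = 0) : ∃ m : ℤ, x = m * Real.pi := by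
  obtain ⟨m, hm⟩ := Real.sin_eq_zero_iff.1 h
  exact ⟨m, hm.symm⟩

lemma step_s4 (B s r P : ℝ → ℝ) (hB : Continuous B) (hP : ∀ t, 0 < P t)
    (hs : ∀ t, s t = P t * Real.sin (B t)) (hr : ∀ t, r t = P t * Real.cos (B t))
    (t₁ d₁ ν₁ : ℝ) (hd₁ : HasDerivAt s d₁ t₁) (h1 : s t₁ = 0) (hν₁ : ν₁ = 1 ∨ ν₁ = -1)
    (hsg₁ : ν₁ * r t₁ * d₁ < 0)
    (t₂ d₂ ν₂ : ℝ) (hd₂ : HasDerivAt s d₂ t₂) (h2 : s t₂ = 0) (hν₂ : ν₂ = 1 ∨ ν₂ = -1)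
    (hsg₂ : ν₂ * r t₂ * d₂ < 0) (hlt : t₁ < t₂) (hno : ∀ t ∈ Set.Ioo t₁ t₂, s t ≠ 0) :
    2 * (B t₂ - B t₁) = - Real.pi * (ν₁ + ν₂) := by
  have hsin : ∀ t, s t = 0 → ∃ m : ℤ, B t = m * Real.pi := fun t ht => by
    have := hs t; rw [ht] at this
    rcases mul_eq_zero.1 this.symm with h | h
    · exact absurd h (hP _).ne'
    · exact sin_zero_int h
  have e1 := (node_right B s r P hB hP hs hr t₁ d₁ ν₁ hd₁ h1 hν₁ hsg₁).and
    (Ioo_mem_nhdsGT hlt)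
  have e2 := (node_left B s r P hB hP hs hr t₂ d₂ ν₂ hd₂ h2 hν₂ hsg₂).and
    (Ioo_mem_nhdsLT hlt)
  obtain ⟨x, ⟨hx1, hx2⟩, hx⟩ := e1.exists
  obtain ⟨y, ⟨hy1, hy2⟩, hy⟩ := e2.exists
  have k1 : ∃ k : ℤ, B t₁ - Real.pi * (ν₁ + 1) / 2 = k * Real.pi := by
    obtain ⟨m, hm⟩ := hsin _ h1
    rcases hν₁ with rfl | rfl
    · exact ⟨m - 1, by push_cast; rw [hm]; ring⟩
    · exact ⟨m, by rw [hm]; ring⟩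
  have k2 : ∃ k : ℤ, B t₂ + Real.pi * (ν₂ - 1) / 2 = k * Real.pi := by
    obtain ⟨m, hm⟩ := hsin _ h2
    rcases hν₂ with rfl | rfl
    · exact ⟨m, by rw [hm]; ring⟩
    · exact ⟨m - 1, by push_cast; rw [hm]; ring⟩
  obtain ⟨k, hk⟩ := k1
  obtain ⟨l, hl⟩ := k2
  have key : ∀ j : ℤ, (j : ℝ) * Real.pi ∉ Set.uIcc (B x) (B y) := by
    intro j hj
    obtain ⟨z, hz, hzj⟩ := intermediate_value_uIcc hB.continuousOn hj
    refine hno z (Set.OrdConnected.uIcc_subset Set.ordConnected_Ioo hx hy hz) ?_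
    rw [hs, hzj, Real.sin_int_mul_pi, mul_zero]
  have pp := Real.pi_pos
  have hkl : k = l := by
    rw [hk] at hx1 hx2
    rw [hl] at hy1 hy2
    rcases lt_trichotomy k l with h | h | h
    · exfalso
      have h' : (k : ℝ) + 1 ≤ l := by exact_mod_cast h
      have h'' : ((k : ℝ) + 1) * Real.pi ≤ l * Real.pi := by gcongr
      exact key l (Set.mem_uIcc.2 (Or.inl ⟨by linarith, by linarith⟩))
    · exact h
    · exfalso
      have h' : (l : ℝ) + 1 ≤ k := by exact_mod_cast h
      have h'' : ((l : ℝ) + 1) * Real.pi ≤ k * Real.pi := by gcongr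
      exact key k (Set.mem_uIcc.2 (Or.inr ⟨by linarith, by linarith⟩))
  subst hkl
  linarith

lemma frame (f : E2 → ℝ) (hf : ContDiff ℝ (⊤ : ℕ∞) f)
    (h0 : ∀ x : E2, ‖x‖ ≤ 1 → fderiv ℝ f x ≠ 0) :
    ∃ B P : ℝ → ℝ, Continuous B ∧ (∀ t, B (t + 2 * Real.pi) = B t - 2 * Real.pi) ∧
      (∀ t, 0 < P t) ∧
      (∀ t, deriv (fun t => f (sphPt t)) t = P t * Real.sin (B t)) ∧
      (∀ t, ⟪gradient f (sphPt t), sphPt t⟫ = P t * Real.cos (B t)) := by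
  let e0 : E2 := EuclideanSpace.single 0 1
  let e1 : E2 := EuclideanSpace.single 1 1
  have hdec : ∀ x : E2, x = x 0 • e0 + x 1 • e1 := by
    intro x; ext i; fin_cases i <;> simp [e0, e1]
  let F : E2 → ℂ := fun x => ⟨fderiv ℝ f x e0, fderiv ℝ f x e1⟩
  have hc : Continuous (fderiv ℝ f) := hf.continuous_fderiv (by simp)
  have hF : Continuous F := by
    have h : F = fun x => ((fderiv ℝ f x e0 : ℝ) : ℂ) + ((fderiv ℝ f x e1 : ℝ) : ℂ) * Complex.I := by
      funext x; exact Complex.mk_eq_add_mul_I _ _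
    rw [h]; fun_prop
  have hF0 : ∀ x : E2, ‖x‖ ≤ 1 → F x ≠ 0 := by
    intro x hx h
    apply h0 x hx
    ext v
    have h1 : fderiv ℝ f x e0 = 0 := congrArg Complex.re h
    have h2 : fderiv ℝ f x e1 = 0 := congrArg Complex.im h
    rw [hdec v]
    simp [h1, h2]
  obtain ⟨L, hL, hLF⟩ := log_lift F hF hF0
  have hpc : Continuous sphPt := by
    unfold sphPt
    refine (EuclideanSpace.equiv (Fin 2) ℝ).symm.continuous.comp ?_
    refine continuous_pi fun i => ?_
    fin_cases i
    · exact Real.continuous_cos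
    · exact Real.continuous_sin
  have p0 : ∀ t, sphPt t 0 = Real.cos t := fun t => by simp [sphPt]
  have p1 : ∀ t, sphPt t 1 = Real.sin t := fun t => by simp [sphPt]
  have hps : ∀ t, sphPt t ∈ Metric.sphere (0 : E2) 1 := by
    intro t
    simp [EuclideanSpace.norm_eq, p0, p1]
  let q : ℝ → Metric.sphere (0 : E2) 1 := fun t => ⟨sphPt t, hps t⟩
  have hq : Continuous q := hpc.subtype_mk _
  have hqp : ∀ t, q (t + 2 * Real.pi) = q t := by
    intro t; apply Subtype.ext; simp [q, sphPt]
  have hre : ∀ t, fderiv ℝ f (sphPt t) e0 = Real.exp (L (q t)).re * Real.cos (L (q t)).im := by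
    intro t
    have := congrArg Complex.re (hLF (q t))
    rw [Complex.exp_re] at this
    exact this.symm
  have him : ∀ t, fderiv ℝ f (sphPt t) e1 = Real.exp (L (q t)).re * Real.sin (L (q t)).im := by
    intro t
    have := congrArg Complex.im (hLF (q t))
    rw [Complex.exp_im] at this
    exact this.symm
  have hdp : ∀ t, HasDerivAt sphPt (-Real.sin t • e0 + Real.cos t • e1) t := by
    intro t
    have h : sphPt = fun t => Real.cos t • e0 + Real.sin t • e1 := by
      funext t; rw [hdec (sphPt t), p0, p1]
    rw [h]
    exact ((Real.hasDerivAt_cos t).smul_const e0).add ((Real.hasDerivAt_sin t).smul_const e1)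
  have hfd : Differentiable ℝ f := hf.differentiable (by simp)
  refine ⟨fun t => (L (q t)).im - t, fun t => Real.exp (L (q t)).re, ?_, ?_, ?_, ?_, ?_⟩
  · exact (Complex.continuous_im.comp (hL.comp hq)).sub continuous_id
  · intro t; simp only [hqp]; ring
  · intro t; exact Real.exp_pos _
  · intro t
    have := ((hfd (sphPt t)).hasFDerivAt.comp_hasDerivAt t (hdp t)).deriv
    have h2 : deriv (fun t => f (sphPt t)) t = _ := this
    rw [h2]
    simp only [map_add, map_smul, hre, him, Real.sin_sub, smul_eq_mul]
    ring
  · intro t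
    have h : ⟪gradient f (sphPt t), sphPt t⟫ = fderiv ℝ f (sphPt t) (sphPt t) := by
      simp [gradient]
    rw [h]
    have h3 : fderiv ℝ f (sphPt t) (sphPt t) =
        fderiv ℝ f (sphPt t) (Real.cos t • e0 + Real.sin t • e1) := by
      congr 1
      rw [← p0, ← p1]; exact hdec _
    rw [h3]
    simp only [map_add, map_smul, hre, him, Real.cos_sub, smul_eq_mul]
    ring

/-- If a ribbon `a` admits an extension with no critical points in the open unit disk
(that is, `γ(a) = 0`), then its signature satisfies `σ(a) = 2`. -/
theorem stmt_4 (n : ℕ) (a : Ribbon n)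
    (h : ∃ f : E2 → ℝ, IsExtension a f ∧ critPts f = ∅) :
    a.sigma = 2 := by
  obtain ⟨f, ⟨hf, hfg, hsph, hsign⟩, hcr⟩ := h
  have h0 : ∀ x : E2, ‖x‖ ≤ 1 → fderiv ℝ f x ≠ 0 := by
    intro x hx h
    rcases hx.lt_or_eq with h1 | h1
    · have : x ∈ critPts f := ⟨by simpa using h1, h⟩
      rw [hcr] at this; exact this
    · exact hsph x (by simpa using h1) h
  obtain ⟨B, P, hB, hBp, hP, hs, hr⟩ := frame f hf h0
  have hfg' : (fun t => f (sphPt t)) = a.g := funext hfg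
  rw [hfg'] at hs
  have hg1 : ContDiff ℝ (⊤ : ℕ∞) (deriv a.g) := (contDiff_infty_iff_deriv.1 a.smooth_g).2
  have hgd : ∀ t, HasDerivAt (deriv a.g) (deriv (deriv a.g) t) t := fun t =>
    (hg1.differentiable (by simp) t).hasDerivAt
  have per : ∀ u : ℝ → ℝ, Function.Periodic u (2 * Real.pi) →
      Function.Periodic (deriv u) (2 * Real.pi) := by
    intro u hu t
    rw [← deriv_comp_add_const]
    congr 1
    funext t; exact hu t
  have hp1 := per _ a.periodic_g
  have hp2 := per _ hp1
  have hrp : ∀ t, sphPt (t + 2 * Real.pi) = sphPt t := by intro t; simp [sphPt]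
  obtain ⟨N, rfl⟩ : ∃ N, n = N + 1 := ⟨n - 1, by have := a.n_pos; omega⟩
  let r : ℝ → ℝ := fun t => ⟪gradient f (sphPt t), sphPt t⟫
  have hsg : ∀ i, (a.ν i : ℝ) * r (a.θ i) * deriv (deriv a.g) (a.θ i) < 0 := by
    intro i
    rcases lt_or_gt_of_ne (a.node_nondeg i) with h | h
    · exact mul_neg_of_pos_of_neg ((hsign i).1 h) h
    · exact mul_neg_of_neg_of_pos ((hsign i).2 h) h
  have hν : ∀ i, (a.ν i : ℝ) = 1 ∨ (a.ν i : ℝ) = -1 := by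
    intro i
    rcases a.nu_sign i with h | h <;> simp [h]
  have hmid : ∀ i : Fin N, 2 * (B (a.θ i.succ) - B (a.θ i.castSucc)) =
      - Real.pi * (a.ν i.castSucc + a.ν i.succ) := by
    intro i
    refine step_s4 B (deriv a.g) r P hB hP hs hr _ _ _ (hgd _) (a.node_crit _) (hν _) (hsg _)
      _ _ _ (hgd _) (a.node_crit _) (hν _) (hsg _) (a.theta_mono i.castSucc_lt_succ) ?_
    intro t ht h
    obtain ⟨j, rfl⟩ := a.crit_only t ⟨(a.theta_mem _).1.trans ht.1.le,
      ht.2.trans (a.theta_mem _).2⟩ h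
    have h1 := a.theta_mono.lt_iff_lt.1 ht.1
    have h2 := a.theta_mono.lt_iff_lt.1 ht.2
    simp only [Fin.lt_def, Fin.val_castSucc, Fin.val_succ] at h1 h2
    omega
  have hlast : 2 * (B (a.θ 0 + 2 * Real.pi) - B (a.θ (Fin.last N))) =
      - Real.pi * (a.ν (Fin.last N) + a.ν 0) := by
    refine step_s4 B (deriv a.g) r P hB hP hs hr _ _ _ (hgd _) (a.node_crit _) (hν _) (hsg _)
      _ _ _ (hgd _) ?_ (hν _) ?_ ?_ ?_
    · rw [hp1]; exact a.node_crit 0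
    · rw [hp2]
      have : r (a.θ 0 + 2 * Real.pi) = r (a.θ 0) := by simp only [r, hrp]
      rw [this]; exact hsg 0
    · linarith [(a.theta_mem (Fin.last N)).2, (a.theta_mem 0).1]
    · intro t ht h
      by_cases htt : t < 2 * Real.pi
      · obtain ⟨j, rfl⟩ := a.crit_only t ⟨(a.theta_mem _).1.trans ht.1.le, htt⟩ h
        exact absurd (a.theta_mono.lt_iff_lt.1 ht.1) (not_lt.2 (Fin.le_last j))
      · have h' : deriv a.g (t - 2 * Real.pi) = 0 := by rw [hp1.sub_eq]; exact h
        obtain ⟨j, hj⟩ := a.crit_only (t - 2 * Real.pi) ⟨by linarith, by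
          linarith [ht.2, (a.theta_mem 0).2]⟩ h'
        have : a.θ j < a.θ 0 := by linarith [ht.2]
        exact absurd (a.theta_mono.lt_iff_lt.1 this) (not_lt.2 (Fin.zero_le j))
  have hsum : ∑ i : Fin N, 2 * (B (a.θ i.succ) - B (a.θ i.castSucc)) =
      ∑ i : Fin N, - Real.pi * ((a.ν i.castSucc : ℝ) + a.ν i.succ) :=
    Finset.sum_congr rfl fun i _ => hmid i
  rw [← Finset.mul_sum, ← Finset.mul_sum, Finset.sum_sub_distrib, Finset.sum_add_distrib] at hsum
  have b1 := Fin.sum_univ_succ (fun i => B (a.θ i))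
  have b2 := Fin.sum_univ_castSucc (fun i => B (a.θ i))
  have v1 := Fin.sum_univ_succ (fun i => (a.ν i : ℝ))
  have v2 := Fin.sum_univ_castSucc (fun i => (a.ν i : ℝ))
  rw [hBp] at hlast
  have e1 : Real.pi * (∑ i, (a.ν i : ℝ)) = Real.pi * 2 := by
    have w1 : ∑ i : Fin N, (a.ν i.succ : ℝ) = ∑ i, (a.ν i : ℝ) - a.ν 0 := by linarith
    have w2 : ∑ i : Fin N, (a.ν i.castSucc : ℝ) = ∑ i, (a.ν i : ℝ) - a.ν (Fin.last N) := by linarith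
    rw [w1, w2] at hsum
    linarith
  have e2 := mul_left_cancel₀ Real.pi_pos.ne' e1
  unfold Ribbon.sigma
  exact_mod_cast e2
end
end
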